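/- arXiv:2605.19596 — 2 statements merged into one kernel-verified Lean document; each statement's English description precedes it below -/
import Mathlib

section
/- Let q = p^m where p ≡ 3 (mod 8) is prime and m ≡ 2 (mod 4). Let x, a, b be integers with x² = q (so q = x² + 4·0²), q = a² + 2b² with a ≡ 1 (mod 4), and suppose a = x + 4. Then D = C_0^8 ∪ C_1^8 ∪ C_2^8 ∪ C_5^8 is a skew Paley (q,(q−1)/2,(q−5)/4,(q−1)/4)-PDS corresponding to the Paley PDS C_0^2; that is, Δ(D) = ((q−5)/4)·C_0^2 + ((q−1)/4)·C_1^2 as multisets. -/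
open Finset

section Defs

variable {G : Type*} [AddCommGroup G] [Fintype G] [DecidableEq G]

/-- The multiset `Δ(D)` of internal differences `x - y` (for `x ≠ y` in `D`). -/
def intDiff (D : Finset G) : Multiset G :=
  ((D ×ˢ D).filter (fun p => p.1 ≠ p.2)).val.map (fun p => p.1 - p.2)

/-- The multiset `Δ(D, E)` of external differences `x - y` for `x ∈ D`, `y ∈ E`. -/
def extDiff (D E : Finset G) : Multiset G :=
  (D ×ˢ E).val.map (fun p => p.1 - p.2)

/-- The finset `G^*` of nonzero elements of `G`. -/
def Gstar (G : Type*) [AddCommGroup G] [Fintype G] [DecidableEq G] : Finset G :=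
  Finset.univ.erase 0

/-- `A` is a `(v, k, lam, mu)` partial difference set in `G`:
`Δ(A) = lam • A^* + mu • (G^* \ A)`. -/
def IsPDS (A : Finset G) (v k lam mu : ℕ) : Prop :=
  Fintype.card G = v ∧ A.card = k ∧
    intDiff A = lam • (A.erase 0).val + mu • (Gstar G \ A).val

/-- `D` is a `(v, k, lam, mu)` skew partial difference set corresponding to the
`(v, k, lam, mu)`-PDS `A`: `Δ(D) = lam • A^* + mu • (G^* \ A)`. -/
def IsSkewPDS (D A : Finset G) (v k lam mu : ℕ) : Prop :=
  IsPDS A v k lam mu ∧ D.card = k ∧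
    intDiff D = lam • (A.erase 0).val + mu • (Gstar G \ A).val

/-- `D` is an `(n, m, k₁, …, k_m; lam, mu)` disjoint partial difference family relative
to `T`: the `D i` are pairwise disjoint subsets of `G^*` of sizes `k i`, and
`∑ i, Δ(D i) = lam • T + mu • (G^* \ T)`. -/
def IsDPDF {ι : Type*} [Fintype ι] (D : ι → Finset G) (n m : ℕ) (k : ι → ℕ)
    (T : Finset G) (lam mu : ℕ) : Prop :=
  Fintype.card G = n ∧ Fintype.card ι = m ∧
    (∀ i, (0 : G) ∉ D i) ∧ (∀ i, (D i).card = k i) ∧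
    (Pairwise (fun i j => Disjoint (D i) (D j))) ∧
    ∑ i, intDiff (D i) = lam • T.val + mu • (Gstar G \ T).val

/-- `D` is an `(n, m, k₁, …, k_m; lam, mu)` external partial difference family relative
to `T`: the `D i` are pairwise disjoint subsets of `G^*` of sizes `k i`, and
`∑_{i ≠ j}, Δ(D i, D j) = lam • T + mu • (G^* \ T)`. -/
def IsEPDF {ι : Type*} [Fintype ι] [DecidableEq ι] (D : ι → Finset G) (n m : ℕ)
    (k : ι → ℕ) (T : Finset G) (lam mu : ℕ) : Prop :=
  Fintype.card G = n ∧ Fintype.card ι = m ∧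
    (∀ i, (0 : G) ∉ D i) ∧ (∀ i, (D i).card = k i) ∧
    (Pairwise (fun i j => Disjoint (D i) (D j))) ∧
    ∑ i, ∑ j ∈ Finset.univ.erase i, extDiff (D i) (D j)
      = lam • T.val + mu • (Gstar G \ T).val

/-- `D` is an `(n, m, k₁, …, k_m, lam)` disjoint difference family:
`∑ i, Δ(D i) = lam • G^*`. -/
def IsDDF {ι : Type*} [Fintype ι] (D : ι → Finset G) (n m : ℕ) (k : ι → ℕ)
    (lam : ℕ) : Prop :=
  Fintype.card G = n ∧ Fintype.card ι = m ∧
    (∀ i, (0 : G) ∉ D i) ∧ (∀ i, (D i).card = k i) ∧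
    (Pairwise (fun i j => Disjoint (D i) (D j))) ∧
    ∑ i, intDiff (D i) = lam • (Gstar G).val

/-- `D` is an `(n, m, k₁, …, k_m, lam)` external difference family:
`∑_{i ≠ j}, Δ(D i, D j) = lam • G^*`. -/
def IsEDF {ι : Type*} [Fintype ι] [DecidableEq ι] (D : ι → Finset G) (n m : ℕ)
    (k : ι → ℕ) (lam : ℕ) : Prop :=
  Fintype.card G = n ∧ Fintype.card ι = m ∧
    (∀ i, (0 : G) ∉ D i) ∧ (∀ i, (D i).card = k i) ∧
    (Pairwise (fun i j => Disjoint (D i) (D j))) ∧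
    ∑ i, ∑ j ∈ Finset.univ.erase i, extDiff (D i) (D j) = lam • (Gstar G).val

end Defs

section Cyclotomy

variable {F : Type*} [Field F] [Fintype F] [DecidableEq F]

/-- The cyclotomic class `C_i^e = α^i ⟨α^e⟩` of order `e` in the finite field `F`,
with respect to the primitive element `α`.  (Since `α` has multiplicative order at most
`|F| - 1`, letting `j` range over `0, …, |F| - 1` captures the whole class.) -/
def cycClass (α : F) (e i : ℕ) : Finset F :=
  (Finset.range (Fintype.card F)).image (fun j => α ^ (e * j + i))

/-- `α` is a primitive element of the finite field `F`: every nonzero element of `F`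
is a power of `α`. -/
def IsPrimitiveElt (α : F) : Prop :=
  ∀ x : F, x ≠ 0 → ∃ n : ℕ, α ^ n = x

end Cyclotomy

/-! ### General lemmas on Jacobi sums -/

lemma aux_frob {F : Type*} [Field F] [Fintype F] (p : ℕ) [hp : Fact p.Prime] [CharP F p]
    (χ ψ : MulChar F ℂ) : jacobiSum (χ ^ p) (ψ ^ p) = jacobiSum χ ψ := by
  have hp0 : p ≠ 0 := hp.out.ne_zero
  unfold jacobiSum
  refine Fintype.sum_bijective (frobenius F p) (bijective_frobenius F p) _ _ ?_
  intro x
  have h1 : (1 : F) - x ^ p = (1 - x) ^ p := by rw [sub_pow_char, one_pow]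
  rw [frobenius_def, h1, MulChar.pow_apply' _ hp0, MulChar.pow_apply' _ hp0, map_pow, map_pow]

lemma aux_corr {F : Type*} [Field F] [Fintype F] (χ ψ : MulChar F ℂ) (z : F) (hz : z ≠ 0) :
    ∑ x, χ x * ψ (x - z) = ψ (-1) * (χ z * ψ z) * jacobiSum χ ψ := by
  unfold jacobiSum
  rw [← Equiv.sum_comp (Equiv.mulLeft₀ z hz), Finset.mul_sum]
  refine Finset.sum_congr rfl fun x _ => ?_
  have : z * x - z = (-1) * z * (1 - x) := by ring
  simp only [Equiv.mulLeft₀_apply, this, map_mul]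
  ring

lemma aux_swap {F : Type*} [Field F] [Fintype F] (χ ψ : MulChar F ℂ) :
    jacobiSum χ (χ * ψ)⁻¹ = χ (-1) * jacobiSum χ ψ := by
  classical
  rw [jacobiSum_eq_sum_sdiff, jacobiSum_eq_sum_sdiff, Finset.mul_sum]
  have hmem : ∀ a ∈ (univ \ {0, 1} : Finset F), a / (a - 1) ∈ (univ \ {0, 1} : Finset F) := by
    intro a ha
    simp only [mem_sdiff, mem_univ, true_and, mem_insert, mem_singleton, not_or] at ha ⊢
    have h1 : a - 1 ≠ 0 := sub_ne_zero.2 ha.2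
    refine ⟨div_ne_zero ha.1 h1, ?_⟩
    intro h
    rw [div_eq_one_iff_eq h1] at h
    exact one_ne_zero (α := F) (by linear_combination h)
  have hinv : ∀ a ∈ (univ \ {0, 1} : Finset F), a / (a - 1) / (a / (a - 1) - 1) = a := by
    intro a ha
    simp only [mem_sdiff, mem_univ, true_and, mem_insert, mem_singleton, not_or] at ha
    have h1 : a - 1 ≠ 0 := sub_ne_zero.2 ha.2
    have : a / (a - 1) - 1 = 1 / (a - 1) := by field_simp; ring
    rw [this]; field_simp
  refine Finset.sum_bij' (fun a _ => a / (a - 1)) (fun a _ => a / (a - 1)) hmem hmem hinv hinv ?_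
  intro a ha
  simp only [mem_sdiff, mem_univ, true_and, mem_insert, mem_singleton, not_or] at ha
  have h1 : a - 1 ≠ 0 := sub_ne_zero.2 ha.2
  have h1' : 1 - a ≠ 0 := sub_ne_zero.2 (Ne.symm ha.2)
  have e1 : (1 : F) - a / (a - 1) = (1 - a)⁻¹ := by
    have : a - 1 = -(1 - a) := by ring
    rw [this]; field_simp; ring
  have e2 : a / (a - 1) = (-1) * a * (1 - a)⁻¹ := by
    have : a - 1 = -(1 - a) := by ring
    rw [this]; field_simp
  have hne : χ (1 - a) * χ ((1 - a)⁻¹) = 1 := by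
    rw [← map_mul, mul_inv_cancel₀ h1', map_one]
  have hm1 : χ (-1) * χ (-1) = 1 := by rw [← map_mul]; simp
  rw [e1, e2, MulChar.inv_apply', MulChar.mul_apply]
  have e3 : (1 - a)⁻¹ = (1 - a)⁻¹ := rfl
  simp only [map_mul]
  calc χ a * (χ (1 - a)⁻¹ * ψ (1 - a)⁻¹) = χ (-1) * χ (-1) * (χ a * (χ (1 - a)⁻¹ * ψ (1 - a)⁻¹)) := by
        rw [hm1, one_mul]
    _ = _ := by ring_nf

/-- Uniqueness of proper representations by `u² + 2 v²`. -/
lemma aux_unique (p m : ℕ) (hp : p.Prime) (hp2 : p ≠ 2) (u v a b : ℤ)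
    (h1 : u ^ 2 + 2 * v ^ 2 = (p : ℤ) ^ m) (h2 : a ^ 2 + 2 * b ^ 2 = (p : ℤ) ^ m)
    (hm : m ≠ 0) (hu : ¬ (p : ℤ) ∣ u) (ha : ¬ (p : ℤ) ∣ a) : u = a ∨ u = -a := by
  have hpp : Prime (p : ℤ) := Nat.prime_iff_prime_int.1 hp
  have hp2' : ¬ (p : ℤ) ∣ 2 := by
    intro h
    have : p ∣ 2 := by exact_mod_cast h
    exact hp2 ((Nat.prime_dvd_prime_iff_eq hp Nat.prime_two).1 this)
  have hpq : (p : ℤ) ∣ (p : ℤ) ^ m := dvd_pow_self _ hm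
  have hqpos : (0 : ℤ) < (p : ℤ) ^ m := by
    have : (0 : ℤ) < p := by exact_mod_cast hp.pos
    positivity
  have hb : ¬ (p : ℤ) ∣ b := by
    intro h
    apply ha
    have : (p : ℤ) ∣ a ^ 2 := by
      have e : a ^ 2 = (p : ℤ) ^ m - 2 * b * b := by rw [← h2]; ring
      rw [e]
      exact dvd_sub hpq (Dvd.dvd.mul_left h _)
    exact hpp.dvd_of_dvd_pow this
  have key : (u * b - v * a) * (u * b + v * a) = (p : ℤ) ^ m * (b ^ 2 - v ^ 2) := by
    linear_combination b ^ 2 * h1 - v ^ 2 * h2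
  have hnot : ¬ ((p : ℤ) ∣ (u * b - v * a) ∧ (p : ℤ) ∣ (u * b + v * a)) := by
    rintro ⟨x, y⟩
    have : (p : ℤ) ∣ 2 * (u * b) := by
      have := dvd_add x y
      rwa [show u * b - v * a + (u * b + v * a) = 2 * (u * b) by ring] at this
    rcases hpp.dvd_or_dvd this with h | h
    · exact hp2' h
    · rcases hpp.dvd_or_dvd h with h | h
      · exact hu h
      · exact hb h
  have small : ∀ w t : ℤ, t ^ 2 + 2 * w ^ 2 = ((p : ℤ) ^ m) ^ 2 → (p : ℤ) ^ m ∣ w → w = 0 := by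
    rintro w t h ⟨k, rfl⟩
    by_contra hne
    have hk : k ≠ 0 := by rintro rfl; simp at hne
    have hk1 : 1 ≤ k ^ 2 := by
      have := sq_pos_of_ne_zero hk  
      linarith
    nlinarith [sq_nonneg t, mul_pos hqpos hqpos]
  have fin : u * b - v * a = 0 ∨ u * b + v * a = 0 := by
    by_cases hd : (p : ℤ) ∣ (u * b - v * a)
    · have hd2 : ¬ (p : ℤ) ∣ (u * b + v * a) := fun h => hnot ⟨hd, h⟩
      left
      apply small _ (u * a + 2 * v * b)
      · rw [sq ((p : ℤ) ^ m)]; nth_rewrite 1 [← h1]; rw [← h2]; ring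
      · exact hpp.pow_dvd_of_dvd_mul_right m hd2 (Dvd.intro _ key.symm)
    · right
      apply small _ (u * a - 2 * v * b)
      · rw [sq ((p : ℤ) ^ m)]; nth_rewrite 1 [← h1]; rw [← h2]; ring
      · exact hpp.pow_dvd_of_dvd_mul_left m hd (Dvd.intro _ key.symm)
  have hsq : u ^ 2 = a ^ 2 := by
    have h3 : u ^ 2 * b ^ 2 = v ^ 2 * a ^ 2 := by
      rcases fin with h | h
      · linear_combination (u * b + v * a) * h
      · linear_combination (u * b - v * a) * h
    have : (p : ℤ) ^ m * (u ^ 2 - a ^ 2) = 0 := by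
      linear_combination (-u ^ 2) * h2 + a ^ 2 * h1 + 2 * h3
    rcases mul_eq_zero.1 this with h | h
    · exact absurd h hqpos.ne'
    · linarith
  exact sq_eq_sq_iff_eq_or_eq_neg.1 hsq

lemma aux_lucas (k p : ℕ) (hp : p.Prime) (hpk : p = 8 * k + 3) (t e : ℕ)
    (he : 8 * e + 1 = p ^ (2 * t)) : ¬ p ∣ Nat.choose (7 * e) (3 * e) := by
  have : Fact p.Prime := ⟨hp⟩
  induction t generalizing e with
  | zero =>
    have : e = 0 := by simp at he; omega
    subst this
    simpa using hp.one_lt.ne'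
  | succ t ih =>
    obtain ⟨e', he'⟩ : ∃ e', 8 * e' + 1 = p ^ (2 * t) := by
      have h1 : p ^ (2 * t) % 8 = 1 := by
        rw [pow_mul, Nat.pow_mod, Nat.pow_mod p 2]
        have : p % 8 = 3 := by omega
        rw [this]; norm_num
      exact ⟨p ^ (2 * t) / 8, by omega⟩
    have hE : e = p ^ 2 * e' + (8 * k ^ 2 + 6 * k + 1) := by
      have : p ^ (2 * (t + 1)) = p ^ 2 * (8 * e' + 1) := by rw [he']; ring
      rw [this] at he
      have h2 : p ^ 2 = 8 * (8 * k ^ 2 + 6 * k + 1) + 1 := by rw [hpk]; ring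
      have : 8 * e + 1 = 8 * (p ^ 2 * e' + (8 * k ^ 2 + 6 * k + 1)) + 1 := by
        rw [he]; nth_rewrite 2 [mul_add]; linarith
      omega
    have h7 : 7 * e = (5 * k + 1) + p * ((7 * k + 2) + p * (7 * e')) := by
      rw [hE, hpk]; ring
    have h3 : 3 * e = k + p * ((3 * k + 1) + p * (3 * e')) := by
      rw [hE, hpk]; ring
    have l1 := Choose.choose_modEq_choose_mod_mul_choose_div_nat (p := p) (n := 7 * e) (k := 3 * e)
    have l2 := Choose.choose_modEq_choose_mod_mul_choose_div_nat (p := p)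
      (n := (7 * k + 2) + p * (7 * e')) (k := (3 * k + 1) + p * (3 * e'))
    have hpos := hp.pos
    rw [h7, h3, Nat.add_mul_mod_self_left, Nat.add_mul_mod_self_left, Nat.add_mul_div_left _ _ hpos,
      Nat.add_mul_div_left _ _ hpos, Nat.mod_eq_of_lt (by omega), Nat.mod_eq_of_lt (by omega),
      Nat.div_eq_of_lt (by omega : 5 * k + 1 < p), Nat.div_eq_of_lt (by omega : k < p),
      zero_add, zero_add] at l1
    rw [Nat.add_mul_mod_self_left, Nat.add_mul_mod_self_left, Nat.add_mul_div_left _ _ hpos,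
      Nat.add_mul_div_left _ _ hpos, Nat.mod_eq_of_lt (by omega), Nat.mod_eq_of_lt (by omega),
      Nat.div_eq_of_lt (by omega : 7 * k + 2 < p), Nat.div_eq_of_lt (by omega : 3 * k + 1 < p),
      zero_add, zero_add] at l2
    have small : ∀ n j, n < p → j ≤ n → ¬ p ∣ Nat.choose n j := by
      intro n j hn hj h
      have := Nat.choose_mul_factorial_mul_factorial hj
      have h2 : p ∣ n.factorial := by
        rw [← this]; exact Dvd.dvd.mul_right (Dvd.dvd.mul_right h _) _
      exact absurd ((hp.dvd_factorial).1 h2) (by omega)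
    rw [h7, h3]
    intro h
    have h' := (l1.dvd_iff (dvd_refl p)).1 h
    rcases (hp.dvd_mul).1 h' with h | h
    · exact small _ _ (by omega) (by omega) h
    · have h' := (l2.dvd_iff (dvd_refl p)).1 h
      rcases (hp.dvd_mul).1 h' with h | h
      · exact small _ _ (by omega) (by omega) h
      · exact ih e' he' h

lemma aux_powsum {F : Type*} [Field F] [Fintype F] (e : ℕ) (he : 0 < e)
    (hq : Fintype.card F = 8 * e + 1) :
    ∑ x : F, x ^ (5 * e) * (1 - x) ^ (7 * e) = - ((-1) ^ (3 * e) * (Nat.choose (7 * e) (3 * e) : F)) := by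
  classical
  have hs : ∀ i : ℕ, 0 < i → ∑ x : F, x ^ i = if 8 * e ∣ i then -1 else 0 := by
    intro i hi
    have h := FiniteField.sum_pow_units F i
    rw [hq, Nat.add_sub_cancel] at h
    rw [← h]
    let φ : Fˣ ↪ F := ⟨fun x ↦ x, Units.val_injective⟩
    have : univ.map φ = univ \ {0} := by
      ext x
      simpa only [mem_map, mem_univ, Function.Embedding.coeFn_mk, true_and, mem_sdiff,
        mem_singleton, φ] using! isUnit_iff_ne_zero
    calc
      ∑ x : F, x ^ i = ∑ x ∈ univ \ {(0 : F)}, x ^ i := by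
        rw [← sum_sdiff ({0} : Finset F).subset_univ, sum_singleton, zero_pow hi.ne', add_zero]
      _ = ∑ x : Fˣ, (x ^ i : F) := by simp [φ, ← this, univ.sum_map φ]
  have hexp : ∀ x : F, x ^ (5 * e) * (1 - x) ^ (7 * e) =
      ∑ i ∈ Finset.range (7 * e + 1), (-1) ^ i * (Nat.choose (7 * e) i : F) * x ^ (5 * e + i) := by
    intro x
    rw [sub_eq_add_neg, add_comm, add_pow, Finset.mul_sum]
    refine Finset.sum_congr rfl fun i _ => ?_
    rw [neg_pow x i, one_pow, pow_add]; ring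
  simp_rw [hexp]
  rw [Finset.sum_comm]
  simp_rw [← Finset.mul_sum]
  rw [Finset.sum_eq_single (3 * e)]
  · rw [hs _ (by omega), if_pos ⟨1, by ring⟩]; ring
  · intro i hi hne
    rw [hs _ (by omega), if_neg, mul_zero]
    rintro ⟨c, hc⟩
    rw [Finset.mem_range] at hi
    have : c < 2 := by by_contra h; push Not at h; nlinarith
    have : c = 0 ∨ c = 1 := by omega
    rcases this with rfl | rfl <;> omega
  · intro h; exact absurd (Finset.mem_range.2 (by omega)) h

lemma aux_dup {F : Type*} [Field F] [Fintype F] [DecidableEq F] (hF : ringChar F ≠ 2)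
    (χ φ : MulChar F ℂ) (h4 : χ 4 = 1) (hχ : χ ≠ 1)
    (hφ : ∀ x, φ x = ((quadraticChar F x : ℤ) : ℂ)) : jacobiSum χ χ = jacobiSum χ φ := by
  have h2 : (2 : F) ≠ 0 := Ring.two_ne_zero hF
  have e1 : jacobiSum χ χ = ∑ y : F, χ (1 - y ^ 2) := by
    unfold jacobiSum
    have hb : Function.Bijective (fun x : F => 2 * x - 1) := by
      constructor
      · intro x y h
        simp only at h
        exact mul_left_cancel₀ h2 (by linear_combination h)
      · intro y
        exact ⟨(y + 1) / 2, by field_simp; ring⟩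
    refine Fintype.sum_bijective _ hb _ _ ?_
    intro x
    have : (1 : F) - (2 * x - 1) ^ 2 = 4 * (x * (1 - x)) := by ring
    rw [this, map_mul, h4, one_mul, map_mul]
  have e2 : ∑ y : F, χ (1 - y ^ 2) = ∑ t : F, (φ t + 1) * χ (1 - t) := by
    rw [← Finset.sum_fiberwise (s := univ) (g := fun y : F => y ^ 2)]
    refine Finset.sum_congr rfl fun t _ => ?_
    have hc := quadraticChar_card_sqrts hF t
    rw [Finset.sum_congr rfl (g := fun _ => χ (1 - t))
      (by intro y hy; rw [(Finset.mem_filter.1 hy).2])]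
    rw [Finset.sum_const, nsmul_eq_mul]
    congr 1
    rw [hφ t]
    have : (filter (fun i : F => i ^ 2 = t) univ) = {x : F | x ^ 2 = t}.toFinset := by
      ext; simp
    rw [this]
    exact_mod_cast hc
  rw [e1, e2, jacobiSum_comm]
  simp only [add_mul, one_mul, Finset.sum_add_distrib]
  have e3 : ∑ t : F, χ (1 - t) = 0 := by
    rw [← MulChar.sum_eq_zero_of_ne_one hχ]
    exact (Equiv.subLeft (1 : F)).sum_comp (fun t => χ t)
  rw [e3, add_zero]; rfl

lemma aux_count {F : Type*} [Field F] [Fintype F] [DecidableEq F] (f : F → ℤ) (h0 : f 0 = 0)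
    (h1 : ∀ x, x ≠ 0 → f x = 1 ∨ f x = -1) (hs : ∑ x, f x = 0) (z : F) (hz : z ≠ 0) :
    4 * ((univ.filter (fun x => f x = 1 ∧ f (x - z) = 1)).card : ℤ) =
      (Fintype.card F : ℤ) - 2 - f z - f (-z) + ∑ x, f x * f (x - z) := by
  have key : ∀ x, (4 * (if f x = 1 ∧ f (x - z) = 1 then 1 else 0) : ℤ) =
      1 - (if x = 0 then 1 else 0) - (if x = z then 1 else 0) + f x + f (x - z)
      - (if x = 0 then f (-z) else 0) - (if x = z then f z else 0) + f x * f (x - z) := by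
    intro x
    by_cases hx : x = 0
    · subst hx
      have hz' : (0 : F) ≠ z := Ne.symm hz
      simp [h0, hz']
    · by_cases hxz : x = z
      · subst hxz; simp [h0, hx]
      · rcases h1 x hx with h | h <;> rcases h1 (x - z) (sub_ne_zero.2 hxz) with h' | h' <;>
          simp [h, h', hx, hxz]
  have hs2 : ∑ x, f (x - z) = 0 := by
    rw [← hs]; exact (Equiv.subRight z).sum_comp f
  rw [Finset.card_filter]
  push_cast
  rw [Finset.mul_sum, Finset.sum_congr rfl (fun x _ => key x)]
  simp only [Finset.sum_add_distrib, Finset.sum_sub_distrib, Finset.sum_ite_eq', Finset.sum_const,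
    hs, hs2, Finset.mem_univ, if_true, Finset.card_univ]
  simp
  ring

lemma aux_count_intDiff {F : Type*} [Field F] [Fintype F] [DecidableEq F] (D : Finset F) (z : F) :
    (intDiff D).count z = if z = 0 then 0 else
      (univ.filter (fun x => x ∈ D ∧ x - z ∈ D)).card := by
  unfold intDiff
  rw [Multiset.count_map, ← Finset.filter_val, Finset.card_val]
  split_ifs with hz
  · subst hz
    rw [Finset.card_eq_zero, Finset.filter_eq_empty_iff]
    rintro ⟨x, y⟩ h
    simp only [mem_filter] at h
    intro h'
    exact h.2 (sub_eq_zero.1 h'.symm)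
  · refine Finset.card_bij' (fun a _ => a.1) (fun x _ => (x, x - z)) ?_ ?_ ?_ ?_
    · rintro ⟨x, y⟩ h
      simp only [mem_filter, mem_product, mem_univ, true_and] at h ⊢
      have : x - z = y := by rw [h.2]; ring
      rw [this]; exact h.1.1
    · intro x h
      simp only [mem_filter, mem_product, mem_univ, true_and] at h ⊢
      refine ⟨⟨h, ?_⟩, by ring⟩
      intro h'
      apply hz
      linear_combination h'
    · rintro ⟨x, y⟩ h
      simp only [mem_filter] at h
      simp [h.2]
    · intro x h; rfl

/-- the counts `n_i` -/
def nJ {F : Type*} [Field F] [Fintype F] [DecidableEq F] (L : F → ℕ) (i : ℕ) : ℕ :=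
  (univ.filter (fun x : F => (x ≠ 0 ∧ x ≠ 1) ∧ (L x + 3 * L (1 - x)) % 8 = i)).card

lemma aux_nJ_frob {F : Type*} [Field F] [Fintype F] [DecidableEq F] (p : ℕ) [hp : Fact p.Prime]
    [CharP F p] (hp8 : p % 8 = 3) (α : F) (L : F → ℕ) (hL : ∀ x, x ≠ 0 → α ^ (L x) = x)
    (hα : ∀ n m : ℕ, α ^ n = α ^ m → n % 8 = m % 8) (i j : ℕ) (hi : i < 8) (hj : j = 3 * i % 8) :
    nJ L i = nJ L j := by
  have hLp : ∀ x : F, x ≠ 0 → L (x ^ p) % 8 = 3 * L x % 8 := by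
    intro x hx
    have : α ^ (L (x ^ p)) = α ^ (L x * p) := by rw [hL _ (pow_ne_zero _ hx), pow_mul, hL _ hx]
    rw [hα _ _ this, Nat.mul_mod, hp8]; omega
  unfold nJ
  refine Finset.card_bijective (frobenius F p) (bijective_frobenius F p) ?_
  intro x
  simp only [mem_filter, mem_univ, true_and, frobenius_def]
  have h1 : (1 : F) - x ^ p = (1 - x) ^ p := by rw [sub_pow_char, one_pow]
  have hx0 : x ^ p ≠ 0 ↔ x ≠ 0 := by rw [Ne, pow_eq_zero_iff hp.out.ne_zero]
  have hx1 : x ^ p ≠ 1 ↔ x ≠ 1 := by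
    rw [not_iff_not]
    constructor
    · intro h
      have : (1 - x) ^ p = 0 := by rw [← h1, h, sub_self]
      exact (sub_eq_zero.1 (pow_eq_zero_iff hp.out.ne_zero |>.1 this)).symm
    · rintro rfl; simp
  rw [h1, hx0, hx1]
  refine and_congr_right ?_
  rintro ⟨hx, hx'⟩
  have a1 := hLp x hx
  have a2 := hLp (1 - x) (sub_ne_zero.2 (Ne.symm hx'))
  omega

lemma aux_nJ_sum {F R : Type*} [Field F] [Fintype F] [DecidableEq F] [CommRing R] (p : ℕ)
    [hp : Fact p.Prime] [CharP F p] (hp8 : p % 8 = 3) (α : F) (L : F → ℕ)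
    (hL : ∀ x, x ≠ 0 → α ^ (L x) = x) (hα : ∀ n m : ℕ, α ^ n = α ^ m → n % 8 = m % 8)
    (ζ : R) (hζ : ζ ^ 4 = -1) (X : F → R) (hX0 : X 0 = 0) (hX : ∀ n : ℕ, X (α ^ n) = ζ ^ n) :
    ∑ x, X x * X (1 - x) ^ 3 = (((nJ L 0 : ℤ) - nJ L 4 : ℤ) : R) +
      (((nJ L 1 : ℤ) - nJ L 5 : ℤ) : R) * (ζ + ζ ^ 3) := by
  have h8 : ζ ^ 8 = 1 := by linear_combination (ζ ^ 4 - 1) * hζ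
  have step : ∑ x, X x * X (1 - x) ^ 3 = ∑ i ∈ Finset.range 8, (nJ L i : R) * ζ ^ i := by
    have e1 : ∑ x, X x * X (1 - x) ^ 3 =
        ∑ x ∈ univ.filter (fun x : F => x ≠ 0 ∧ x ≠ 1), ζ ^ ((L x + 3 * L (1 - x)) % 8) := by
      rw [Finset.sum_filter]
      refine Finset.sum_congr rfl fun x _ => ?_
      split_ifs with h
      · have hx := hX (L x)
        have hx1 := hX (L (1 - x))
        rw [hL _ h.1] at hx
        rw [hL _ (sub_ne_zero.2 (Ne.symm h.2))] at hx1
        rw [hx, hx1, ← pow_mul, ← pow_add, mul_comm (L (1 - x)) 3, pow_eq_pow_mod _ h8]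
      · by_cases h0 : x = 0
        · simp [h0, hX0]
        · have : x = 1 := by by_contra h'; exact h ⟨h0, h'⟩
          simp [this, hX0]
    rw [e1, ← Finset.sum_fiberwise_of_maps_to (t := Finset.range 8)
      (g := fun x => (L x + 3 * L (1 - x)) % 8)
      (fun x _ => Finset.mem_range.2 (Nat.mod_lt _ (by norm_num)))]
    refine Finset.sum_congr rfl fun i _ => ?_
    rw [Finset.sum_congr rfl (g := fun _ => ζ ^ i)
      (by intro y hy; rw [(Finset.mem_filter.1 hy).2])]
    rw [Finset.sum_const, nsmul_eq_mul, Finset.filter_filter]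
    rfl
  have f13 := aux_nJ_frob p hp8 α L hL hα 1 3 (by norm_num) (by norm_num)
  have f26 := aux_nJ_frob p hp8 α L hL hα 2 6 (by norm_num) (by norm_num)
  have f57 := aux_nJ_frob p hp8 α L hL hα 5 7 (by norm_num) (by norm_num)
  rw [step]
  simp only [Finset.sum_range_succ, Finset.sum_range_zero]
  rw [← f13, ← f26, ← f57]
  push_cast
  linear_combination ((nJ L 4 : R) + (nJ L 5 : R) * ζ + (nJ L 2 : R) * ζ ^ 2 + (nJ L 5 : R) * ζ ^ 3) * hζ

/-- Auxiliary bundle of data: a logarithm to base `α` and a character of order `8`. -/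
structure CycSetup {F : Type*} [Field F] [Fintype F] [DecidableEq F] (p : ℕ) (α : F) (L : F → ℕ)
    (e : ℕ) (χ : MulChar F ℂ) (ζ : ℂ) : Prop where
  p8 : p % 8 = 3
  card : Fintype.card F = 8 * e + 1
  eodd : e % 2 = 1
  hα0 : α ≠ 0
  hL : ∀ x, x ≠ 0 → α ^ (L x) = x
  hα : ∀ n m : ℕ, α ^ n = α ^ m → n % 8 = m % 8
  hζ : ζ ^ 4 = -1
  hχ : χ α = ζ
  h20 : (2 : F) ≠ 0
  h2 : L 2 % 4 = 0

namespace CycSetup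

variable {F : Type*} [Field F] [Fintype F] [DecidableEq F] {p : ℕ} {α : F} {L : F → ℕ}
  {e : ℕ} {χ : MulChar F ℂ} {ζ : ℂ}

lemma h8 (S : CycSetup p α L e χ ζ) : ζ ^ 8 = 1 := by
  linear_combination (ζ ^ 4 - 1) * S.hζ

lemma chi (S : CycSetup p α L e χ ζ) (x : F) (hx : x ≠ 0) : χ x = ζ ^ (L x % 8) := by
  conv_lhs => rw [← S.hL x hx]
  rw [map_pow, S.hχ, pow_eq_pow_mod _ S.h8]

lemma Lpow (S : CycSetup p α L e χ ζ) (n : ℕ) : L (α ^ n) % 8 = n % 8 :=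
  S.hα _ _ (S.hL _ (pow_ne_zero _ S.hα0))

lemma Lmul (S : CycSetup p α L e χ ζ) (x y : F) (hx : x ≠ 0) (hy : y ≠ 0) :
    L (x * y) % 8 = (L x + L y) % 8 := by
  apply S.hα
  rw [S.hL _ (mul_ne_zero hx hy), pow_add, S.hL _ hx, S.hL _ hy]

lemma Lneg1 (S : CycSetup p α L e χ ζ) : L (-1) % 8 = 4 := by
  have h1 : α ^ (8 * e) = 1 := by
    have := FiniteField.pow_card_sub_one_eq_one α S.hα0
    rwa [S.card, Nat.add_sub_cancel] at this
  have h2 : (α ^ (4 * e)) ^ 2 = 1 := by rw [← pow_mul, ← h1]; ring_nf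
  have h3 := S.eodd
  have h4 : α ^ (4 * e) = 1 ∨ α ^ (4 * e) = -1 := sq_eq_sq_iff_eq_or_eq_neg.1 (by rw [h2, one_pow])
  rcases h4 with h | h
  · have := S.hα (4 * e) 0 (by rw [h, pow_zero])
    omega
  · rw [← h, S.Lpow]; omega

lemma Lneg (S : CycSetup p α L e χ ζ) (x : F) (hx : x ≠ 0) : L (-x) % 8 = (L x + 4) % 8 := by
  have h := S.Lmul (-1) x (by simp) hx
  rw [neg_one_mul] at h
  have := S.Lneg1
  omega

lemma chi_neg (S : CycSetup p α L e χ ζ) : χ (-1) = -1 := by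
  rw [S.chi _ (by simp), S.Lneg1, S.hζ]

lemma four_ne (S : CycSetup p α L e χ ζ) : (4 : F) ≠ 0 := by
  have : (4 : F) = 2 * 2 := by norm_num
  rw [this]; exact mul_ne_zero S.h20 S.h20

lemma chi_four (S : CycSetup p α L e χ ζ) : χ 4 = 1 := by
  have h := S.Lmul 2 2 S.h20 S.h20
  rw [show (2 : F) * 2 = 4 by norm_num] at h
  have := S.h2
  rw [S.chi _ S.four_ne, show L (4 : F) % 8 = 0 by omega, pow_zero]

lemma chi8 (S : CycSetup p α L e χ ζ) : χ ^ 8 = 1 := by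
  ext a
  rw [MulChar.pow_apply_coe, MulChar.one_apply_coe, S.chi _ a.ne_zero, ← pow_mul, mul_comm, pow_mul,
    S.h8, one_pow]

lemma chi_pow_mod (S : CycSetup p α L e χ ζ) (n : ℕ) : χ ^ n = χ ^ (n % 8) :=
  pow_eq_pow_mod n S.chi8

lemma zeta_pow_ne (S : CycSetup p α L e χ ζ) (j : ℕ) (hj : j % 8 ≠ 0) : ζ ^ j ≠ 1 := by
  have hp : orderOf ζ = 2 ^ (2 + 1) := by
    apply orderOf_eq_prime_pow
    · norm_num [S.hζ]
    · norm_num [S.h8]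
  intro h
  have := orderOf_dvd_of_pow_eq_one h
  rw [hp] at this
  omega

lemma chi_pow_ne (S : CycSetup p α L e χ ζ) (j : ℕ) (hj : j % 8 ≠ 0) : χ ^ j ≠ 1 := by
  intro h
  apply S.zeta_pow_ne j hj
  have : (χ ^ j) α = (1 : MulChar F ℂ) α := by rw [h]
  rw [MulChar.pow_apply' _ (by rintro rfl; simp at hj), S.hχ] at this
  rw [this]
  exact MulChar.one_apply (isUnit_iff_ne_zero.2 S.hα0)

lemma chi_inv (S : CycSetup p α L e χ ζ) (j k : ℕ) (h : (j + k) % 8 = 0) : (χ ^ j)⁻¹ = χ ^ k := by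
  rw [inv_eq_iff_mul_eq_one, ← pow_add, S.chi_pow_mod, h, pow_zero]

lemma charne (S : CycSetup p α L e χ ζ) : ringChar F ≠ 2 := by
  intro h
  apply S.h20
  have : ((2 : ℕ) : F) = 0 := by rw [← h]; exact CharP.cast_eq_zero F (ringChar F)
  exact_mod_cast this

lemma quad (S : CycSetup p α L e χ ζ) (x : F) : (χ ^ 4) x = ((quadraticChar F x : ℤ) : ℂ) := by
  rw [MulChar.pow_apply' _ (by norm_num)]
  by_cases hx : x = 0
  · subst hx; simp [MulChar.map_zero]
  · rw [S.chi x hx, ← pow_mul, mul_comm, pow_mul, S.hζ]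
    have hsq : L x % 2 = 0 → IsSquare x := by
      intro h
      refine ⟨α ^ (L x / 2), ?_⟩
      rw [← pow_add, show L x / 2 + L x / 2 = L x by omega, S.hL x hx]
    have hsq' : IsSquare x → L x % 2 = 0 := by
      rintro ⟨y, rfl⟩
      have hy : y ≠ 0 := by rintro rfl; simp at hx
      have := S.Lmul y y hy hy
      omega
    by_cases h : L x % 2 = 0
    · rw [(quadraticChar_one_iff_isSquare hx).2 (hsq h)]
      have : Even (L x % 8) := by rw [Nat.even_iff]; omega
      rw [this.neg_one_pow]; simp
    · rw [(quadraticChar_neg_one_iff_not_isSquare).2 (fun h' => h (hsq' h'))]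
      have : Odd (L x % 8) := by rw [Nat.odd_iff]; omega
      rw [this.neg_one_pow]; simp

lemma J_neg_aux (S : CycSetup p α L e χ ζ) (j k : ℕ) (hj : j % 2 = 1) (hk : k % 8 = 3 * j % 8) :
    jacobiSum (χ ^ j) (χ ^ j) = - jacobiSum (χ ^ j) (χ ^ k) := by
  have h1 : jacobiSum (χ ^ j) (χ ^ j) = jacobiSum (χ ^ j) (χ ^ 4) := by
    refine aux_dup S.charne _ _ ?_ (S.chi_pow_ne j (by omega)) S.quad
    rw [MulChar.pow_apply' _ (by omega), S.chi_four, one_pow]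
  have h2 := aux_swap (χ ^ j) (χ ^ 4)
  rw [← pow_add, S.chi_inv (j + 4) k (by omega), MulChar.pow_apply' _ (by omega), S.chi_neg,
    Odd.neg_one_pow (Nat.odd_iff.2 hj)] at h2
  rw [h1, h2]; ring

lemma J_frob (S : CycSetup p α L e χ ζ) [hp : Fact p.Prime] [CharP F p] (j k j' k' : ℕ)
    (hj : j' % 8 = 3 * j % 8) (hk : k' % 8 = 3 * k % 8) :
    jacobiSum (χ ^ j') (χ ^ k') = jacobiSum (χ ^ j) (χ ^ k) := by
  rw [← aux_frob p (χ ^ j) (χ ^ k), ← pow_mul, ← pow_mul, S.chi_pow_mod (j * p),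
    S.chi_pow_mod (k * p), S.chi_pow_mod j', S.chi_pow_mod k', Nat.mul_mod j, Nat.mul_mod k, S.p8,
    hj, hk]
  congr 2 <;> omega

lemma J_norm (S : CycSetup p α L e χ ζ) [hp : Fact p.Prime] [CharP F p] (j k j' k' : ℕ)
    (hj : (j + j') % 8 = 0) (hk : (k + k') % 8 = 0) (hj0 : j % 8 ≠ 0) (hk0 : k % 8 ≠ 0)
    (hjk : (j + k) % 8 ≠ 0) :
    jacobiSum (χ ^ j) (χ ^ k) * jacobiSum (χ ^ j') (χ ^ k') = Fintype.card F := by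
  rw [← S.chi_inv j j' hj, ← S.chi_inv k k' hk]
  refine jacobiSum_mul_jacobiSum_inv ?_ (S.chi_pow_ne j hj0) (S.chi_pow_ne k hk0) ?_
  · rw [ringChar.eq F p, ringChar.eq_zero (R := ℂ)]
    exact hp.out.ne_zero.symm
  · rw [← pow_add]; exact S.chi_pow_ne _ hjk

lemma J_inv (S : CycSetup p α L e χ ζ) (j k : ℕ) (hj : (j + k) % 8 = 0) (hj0 : j % 8 ≠ 0) :
    jacobiSum (χ ^ j) (χ ^ k) = - (-1) ^ j := by
  rw [← S.chi_inv j k hj, jacobiSum_nontrivial_inv (S.chi_pow_ne j hj0),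
    MulChar.pow_apply' _ (by rintro rfl; simp at hj0), S.chi_neg]

lemma J13 (S : CycSetup p α L e χ ζ) [hp : Fact p.Prime] [CharP F p] :
    jacobiSum (χ ^ 1) (χ ^ 3) = (((nJ L 0 : ℤ) - nJ L 4 : ℤ) : ℂ) +
      (((nJ L 1 : ℤ) - nJ L 5 : ℤ) : ℂ) * (ζ + ζ ^ 3) := by
  rw [← aux_nJ_sum p S.p8 α L S.hL S.hα ζ S.hζ (fun x => χ x) χ.map_zero
    (by intro n; simp only [map_pow, S.hχ])]
  unfold jacobiSum
  simp only [pow_one, MulChar.pow_apply' _ (show 3 ≠ 0 by norm_num)]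

lemma J57 (S : CycSetup p α L e χ ζ) [hp : Fact p.Prime] [CharP F p] :
    jacobiSum (χ ^ 5) (χ ^ 7) = (((nJ L 0 : ℤ) - nJ L 4 : ℤ) : ℂ) -
      (((nJ L 1 : ℤ) - nJ L 5 : ℤ) : ℂ) * (ζ + ζ ^ 3) := by
  have h := aux_nJ_sum p S.p8 α L S.hL S.hα (ζ ^ 5) (by rw [← pow_mul, mul_comm, pow_mul, S.hζ]; norm_num)
    (fun x => (χ ^ 5) x) (χ ^ 5).map_zero
    (by intro n; simp only [map_pow, MulChar.pow_apply' _ (show 5 ≠ 0 by norm_num), S.hχ]; ring)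
  have e : jacobiSum (χ ^ 5) (χ ^ 7) = ∑ x, (χ ^ 5) x * (χ ^ 5) (1 - x) ^ 3 := by
    rw [show χ ^ 7 = (χ ^ 5) ^ 3 by rw [← pow_mul, S.chi_pow_mod (5 * 3)]]
    unfold jacobiSum
    simp only [MulChar.pow_apply' (χ ^ 5) (show 3 ≠ 0 by norm_num)]
  rw [e, h]
  have e5 : ζ ^ 5 = -ζ := by linear_combination ζ * S.hζ
  rw [e5]
  ring

lemma corr (S : CycSetup p α L e χ ζ) (z : F) (hz : z ≠ 0) (j k : ℕ) (hj : j ≠ 0) (hk : k ≠ 0) :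
    ∑ x, χ x ^ j * χ (x - z) ^ k =
      (-1) ^ k * χ z ^ ((j + k) % 8) * jacobiSum (χ ^ j) (χ ^ k) := by
  have h := aux_corr (χ ^ j) (χ ^ k) z hz
  simp only [MulChar.pow_apply' _ hj, MulChar.pow_apply' _ hk] at h
  have h8 : χ z ^ 8 = 1 := by rw [S.chi z hz, ← pow_mul, mul_comm, pow_mul, S.h8, one_pow]
  rw [h, S.chi_neg, ← pow_add, ← pow_eq_pow_mod _ h8]

end CycSetup

/-- coefficients of `g` -/
noncomputable def gc (i : ℂ) : ℕ → ℂ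
  | 1 => (1 - i) / 4
  | 5 => (1 - i) / 4
  | 3 => (1 + i) / 4
  | 7 => (1 + i) / 4
  | 2 => -i / 2
  | 6 => i / 2
  | _ => 0

/-- The polynomial giving `g`. -/
noncomputable def gP (i X : ℂ) : ℂ := ∑ j ∈ Finset.range 8, gc i j * X ^ j

lemma gP_eq (i X : ℂ) : gP i X = (1 - i) / 4 * X + -i / 2 * X ^ 2 + (1 + i) / 4 * X ^ 3 +
    (1 - i) / 4 * X ^ 5 + i / 2 * X ^ 6 + (1 + i) / 4 * X ^ 7 := by
  simp [gP, gc, Finset.sum_range_succ]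

lemma gP_val (ζ : ℂ) (hζ : ζ ^ 4 = -1) (r : ℕ) (hr : r < 8) :
    gP (ζ ^ 2) (ζ ^ r) = if r = 0 ∨ r = 1 ∨ r = 2 ∨ r = 5 then 1 else -1 := by
  rw [gP_eq]
  interval_cases r <;> norm_num <;> grind

lemma gP_corr (i u v η T s Z : ℂ) (hi : i ^ 2 = -1) (J S : ℕ → ℕ → ℂ)
    (hJ : ∀ j k, J j k = J k j) (h13 : J 1 3 = u + v * η) (h57 : J 5 7 = u - v * η)
    (h11 : J 1 1 = -(u + v * η)) (h33 : J 3 3 = -(u + v * η)) (h55 : J 5 5 = -(u - v * η))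
    (h77 : J 7 7 = -(u - v * η)) (h15 : J 1 5 = T) (h37 : J 3 7 = T) (h17 : J 1 7 = 1)
    (h35 : J 3 5 = 1) (h22 : J 2 2 = s) (h66 : J 6 6 = s) (h26 : J 2 6 = -1)
    (hS : ∀ j k, j ≠ 0 → k ≠ 0 → S j k = (-1) ^ k * Z ^ ((j + k) % 8) * J j k) :
    ∑ j ∈ Finset.range 8, ∑ k ∈ Finset.range 8, gc i j * gc i k * S j k =
      -1 - 1 / 2 * (u + s) * Z ^ 4 - i / 4 * (u + T) * (Z ^ 2 - Z ^ 6) := by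
  simp only [Finset.sum_range_succ, Finset.sum_range_zero, gc, zero_mul, mul_zero, zero_add, add_zero]
  simp only [hS _ _ (show 1 ≠ 0 by norm_num) (show 1 ≠ 0 by norm_num)]
  simp only [hS _ _ (Nat.succ_ne_zero _) (Nat.succ_ne_zero _)]
  norm_num
  rw [hJ 2 1, hJ 3 1, hJ 3 2, hJ 5 1, hJ 5 2, hJ 5 3, hJ 6 1, hJ 6 2, hJ 6 3, hJ 6 5, hJ 7 1, hJ 7 2,
    hJ 7 3, hJ 7 5, hJ 7 6, h13, h57, h11, h33, h55, h77, h15, h37, h17, h35, h22, h66, h26]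
  have : i ^ 3 = -i := by linear_combination i * hi
  ring_nf
  simp only [hi]
  ring

/-- polynomial for `O` -/
lemma oP_val (ζ : ℂ) (hζ : ζ ^ 4 = -1) (r : ℕ) (hr : r < 8) :
    -ζ ^ 2 / 2 * ((ζ ^ r) ^ 2 - (ζ ^ r) ^ 6) = if r % 4 = 1 then 1 else if r % 4 = 3 then -1 else 0 := by
  interval_cases r <;> norm_num <;> grind

/-- `±1`-valued function of the set `D`. -/
def gZ {F : Type*} [Field F] [DecidableEq F] (L : F → ℕ) (x : F) : ℤ :=
  if x = 0 then 0 else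
    if L x % 8 = 0 ∨ L x % 8 = 1 ∨ L x % 8 = 2 ∨ L x % 8 = 5 then 1 else -1

/-- quadratic character -/
def fZ {F : Type*} [Field F] [DecidableEq F] (L : F → ℕ) (x : F) : ℤ :=
  if x = 0 then 0 else if L x % 2 = 0 then 1 else -1

/-- imaginary part of the quartic character -/
def oZ {F : Type*} [Field F] [DecidableEq F] (L : F → ℕ) (x : F) : ℤ :=
  if x = 0 then 0 else if L x % 4 = 1 then 1 else if L x % 4 = 3 then -1 else 0

namespace CycSetup

variable {F : Type*} [Field F] [Fintype F] [DecidableEq F] {p : ℕ} {α : F} {L : F → ℕ}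
  {e : ℕ} {χ : MulChar F ℂ} {ζ : ℂ}

lemma gZ_cast (S : CycSetup p α L e χ ζ) (x : F) : (gZ L x : ℂ) = gP (ζ ^ 2) (χ x) := by
  unfold gZ
  split_ifs with h h'
  · subst h; rw [MulChar.map_zero, gP_eq]; simp
  · rw [S.chi x h, gP_val _ S.hζ _ (Nat.mod_lt _ (by norm_num)), if_pos h']; simp
  · rw [S.chi x h, gP_val _ S.hζ _ (Nat.mod_lt _ (by norm_num)), if_neg h']; simp

lemma oZ_cast (S : CycSetup p α L e χ ζ) (x : F) :
    (oZ L x : ℂ) = -ζ ^ 2 / 2 * (χ x ^ 2 - χ x ^ 6) := by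
  unfold oZ
  split_ifs with h h' h''
  · subst h; rw [MulChar.map_zero]; simp
  · rw [S.chi x h, oP_val _ S.hζ _ (Nat.mod_lt _ (by norm_num)), if_pos (by omega)]; simp
  · rw [S.chi x h, oP_val _ S.hζ _ (Nat.mod_lt _ (by norm_num)), if_neg (by omega),
      if_pos (by omega)]; simp
  · rw [S.chi x h, oP_val _ S.hζ _ (Nat.mod_lt _ (by norm_num)), if_neg (by omega),
      if_neg (by omega)]; simp

lemma fZ_cast (S : CycSetup p α L e χ ζ) (x : F) : (fZ L x : ℂ) = χ x ^ 4 := by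
  unfold fZ
  split_ifs with h h'
  · subst h; rw [MulChar.map_zero]; simp
  · rw [S.chi x h, ← pow_mul, mul_comm, pow_mul, S.hζ,
      Even.neg_one_pow (Nat.even_iff.2 (by omega))]; simp
  · rw [S.chi x h, ← pow_mul, mul_comm, pow_mul, S.hζ,
      Odd.neg_one_pow (Nat.odd_iff.2 (by omega))]; simp

lemma sum_chi (S : CycSetup p α L e χ ζ) (j : ℕ) (hj : j % 8 ≠ 0) : ∑ x, χ x ^ j = 0 := by
  rw [← MulChar.sum_eq_zero_of_ne_one (S.chi_pow_ne j hj)]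
  refine Finset.sum_congr rfl fun x _ => ?_
  rw [MulChar.pow_apply' _ (by rintro rfl; simp at hj)]

lemma gZ_sum (S : CycSetup p α L e χ ζ) : ∑ x, gZ L x = 0 := by
  have : ((∑ x, gZ L x : ℤ) : ℂ) = 0 := by
    push_cast
    simp only [S.gZ_cast, gP]
    rw [Finset.sum_comm]
    refine Finset.sum_eq_zero fun j hj => ?_
    rw [← Finset.mul_sum]
    by_cases h : j = 0
    · subst h; simp [gc]
    · rw [S.sum_chi j (by rw [Finset.mem_range] at hj; omega), mul_zero]
  exact_mod_cast this

lemma fZ_sum (S : CycSetup p α L e χ ζ) : ∑ x, fZ L x = 0 := by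
  have : ((∑ x, fZ L x : ℤ) : ℂ) = 0 := by
    push_cast
    simp only [S.fZ_cast]
    exact S.sum_chi 4 (by norm_num)
  exact_mod_cast this

lemma fZ_corr (S : CycSetup p α L e χ ζ) (z : F) (hz : z ≠ 0) :
    ∑ x, fZ L x * fZ L (x - z) = -1 := by
  have : ((∑ x, fZ L x * fZ L (x - z) : ℤ) : ℂ) = -1 := by
    push_cast
    simp only [S.fZ_cast]
    rw [S.corr z hz 4 4 (by norm_num) (by norm_num), S.J_inv 4 4 (by norm_num) (by norm_num)]
    norm_num
  exact_mod_cast this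

lemma oZ_corr (S : CycSetup p α L e χ ζ) [hp : Fact p.Prime] [CharP F p] (s : ℤ)
    (hs : jacobiSum (χ ^ 2) (χ ^ 2) = (s : ℂ)) :
    2 * ∑ x, oZ L x * oZ L (x - 1) = -1 - s := by
  have hs' : jacobiSum (χ ^ 6) (χ ^ 6) = (s : ℂ) := by
    rw [S.J_frob 2 2 6 6 (by norm_num) (by norm_num), hs]
  have : ((2 * ∑ x, oZ L x * oZ L (x - 1) : ℤ) : ℂ) = ((-1 - s : ℤ) : ℂ) := by
    push_cast
    simp only [S.oZ_cast]
    have e1 : ∀ x : F, -ζ ^ 2 / 2 * (χ x ^ 2 - χ x ^ 6) *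
        (-ζ ^ 2 / 2 * (χ (x - 1) ^ 2 - χ (x - 1) ^ 6)) =
        -(1 / 4) * (χ x ^ 2 * χ (x - 1) ^ 2 - χ x ^ 2 * χ (x - 1) ^ 6 - χ x ^ 6 * χ (x - 1) ^ 2
          + χ x ^ 6 * χ (x - 1) ^ 6) := by
      intro x
      linear_combination (1 / 4) * (χ x ^ 2 - χ x ^ 6) * (χ (x - 1) ^ 2 - χ (x - 1) ^ 6) * S.hζ
    simp only [e1, ← Finset.mul_sum, Finset.sum_add_distrib, Finset.sum_sub_distrib]
    rw [S.corr 1 one_ne_zero 2 2 (by norm_num) (by norm_num),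
      S.corr 1 one_ne_zero 2 6 (by norm_num) (by norm_num),
      S.corr 1 one_ne_zero 6 2 (by norm_num) (by norm_num),
      S.corr 1 one_ne_zero 6 6 (by norm_num) (by norm_num), hs, hs',
      S.J_inv 2 6 (by norm_num) (by norm_num), S.J_inv 6 2 (by norm_num) (by norm_num)]
    simp only [map_one, one_pow]
    ring
  exact_mod_cast this

lemma gZ_corr (S : CycSetup p α L e χ ζ) [hp : Fact p.Prime] [CharP F p] (u s T : ℤ)
    (hu : u = (nJ L 0 : ℤ) - nJ L 4)
    (hs : jacobiSum (χ ^ 2) (χ ^ 2) = (s : ℂ)) (hT : jacobiSum (χ ^ 1) (χ ^ 5) = (T : ℂ)) (z : F) (hz : z ≠ 0) :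
    2 * ∑ x, gZ L x * gZ L (x - z) = -2 - (u + s) * fZ L z + (u + T) * oZ L z := by
  have hs' : jacobiSum (χ ^ 6) (χ ^ 6) = (s : ℂ) := by
    rw [S.J_frob 2 2 6 6 (by norm_num) (by norm_num), hs]
  have hT' : jacobiSum (χ ^ 3) (χ ^ 7) = (T : ℂ) := by
    rw [S.J_frob 1 5 3 7 (by norm_num) (by norm_num), hT]
  have h13 := S.J13
  have h57 := S.J57
  rw [← hu] at h13 h57
  have h11 := S.J_neg_aux 1 3 (by norm_num) (by norm_num)
  have h55 := S.J_neg_aux 5 7 (by norm_num) (by norm_num)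
  have h33 := S.J_frob 1 1 3 3 (by norm_num) (by norm_num)
  have h77 := S.J_frob 5 5 7 7 (by norm_num) (by norm_num)
  have key := gP_corr (ζ ^ 2) u (((nJ L 1 : ℤ) - nJ L 5 : ℤ) : ℂ) (ζ + ζ ^ 3) T s (χ z)
    (by rw [← pow_mul]; exact S.hζ) (fun j k => jacobiSum (χ ^ j) (χ ^ k))
    (fun j k => ∑ x, χ x ^ j * χ (x - z) ^ k) (fun j k => jacobiSum_comm _ _) h13 h57
    (by rw [h11, h13]) (by rw [h33, h11, h13]) (by rw [h55, h57]) (by rw [h77, h55, h57]) hT hT'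
    (by rw [S.J_inv 1 7 (by norm_num) (by norm_num)]; norm_num)
    (by rw [S.J_inv 3 5 (by norm_num) (by norm_num)]; norm_num) hs hs'
    (by rw [S.J_inv 2 6 (by norm_num) (by norm_num)]; norm_num)
    (fun j k hj hk => S.corr z hz j k hj hk)
  have e1 : ∑ x, gP (ζ ^ 2) (χ x) * gP (ζ ^ 2) (χ (x - z)) =
      ∑ j ∈ Finset.range 8, ∑ k ∈ Finset.range 8, gc (ζ ^ 2) j * gc (ζ ^ 2) k *
        ∑ x, χ x ^ j * χ (x - z) ^ k := by
    simp only [gP, Finset.sum_mul_sum]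
    rw [Finset.sum_comm]
    refine Finset.sum_congr rfl fun j _ => ?_
    rw [Finset.sum_comm]
    refine Finset.sum_congr rfl fun k _ => ?_
    rw [Finset.mul_sum]
    refine Finset.sum_congr rfl fun x _ => ?_
    ring
  have : ((2 * ∑ x, gZ L x * gZ L (x - z) : ℤ) : ℂ) =
      ((-2 - (u + s) * fZ L z + (u + T) * oZ L z : ℤ) : ℂ) := by
    push_cast
    simp only [S.gZ_cast, S.fZ_cast, S.oZ_cast]
    rw [e1, key]
    ring
  exact_mod_cast this

lemma gZ_count (S : CycSetup p α L e χ ζ) [hp : Fact p.Prime] [CharP F p] (u s T : ℤ)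
    (hu : u = (nJ L 0 : ℤ) - nJ L 4)
    (hs : jacobiSum (χ ^ 2) (χ ^ 2) = (s : ℂ)) (hT : jacobiSum (χ ^ 1) (χ ^ 5) = (T : ℂ)) (z : F) (hz : z ≠ 0) :
    8 * ((univ.filter (fun x => gZ L x = 1 ∧ gZ L (x - z) = 1)).card : ℤ) =
      2 * ((Fintype.card F : ℤ) - 2 - gZ L z - gZ L (-z)) - 2 - (u + s) * fZ L z
        + (u + T) * oZ L z := by
  have h := aux_count (gZ L) (by simp [gZ]) (by intro x hx; simp only [gZ, hx, if_false]; split_ifs <;> simp)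
    S.gZ_sum z hz
  have h2 := S.gZ_corr u s T hu hs hT z hz
  linarith

lemma fZ_count (S : CycSetup p α L e χ ζ) (z : F) (hz : z ≠ 0) :
    4 * ((univ.filter (fun x => fZ L x = 1 ∧ fZ L (x - z) = 1)).card : ℤ) =
      (Fintype.card F : ℤ) - 3 - 2 * fZ L z := by
  have h := aux_count (fZ L) (by simp [fZ]) (by intro x hx; simp only [fZ, hx, if_false]; split_ifs <;> simp)
    S.fZ_sum z hz
  have h2 := S.fZ_corr z hz
  have h3 : fZ L (-z) = fZ L z := by
    have := S.Lneg z hz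
    simp only [fZ, neg_eq_zero, hz, if_false]
    congr 1
    rw [eq_iff_iff]; omega
  rw [h, h2, h3]; ring

lemma fZ_count' (S : CycSetup p α L e χ ζ) :
    4 * ((univ.filter (fun x => -fZ L x = 1 ∧ -fZ L (x - 1) = 1)).card : ℤ) =
      (Fintype.card F : ℤ) - 1 := by
  have h := aux_count (fun x => - fZ L x) (by simp [fZ])
    (by intro x hx; simp only [fZ, hx, if_false]; split_ifs <;> simp)
    (by simp [S.fZ_sum]) 1 one_ne_zero
  have h2 := S.fZ_corr 1 one_ne_zero
  have hL1 : L 1 % 8 = 0 := by have := S.Lpow 0; simpa using this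
  have h3 : fZ L 1 = 1 := by
    simp only [fZ, one_ne_zero, if_false]
    rw [if_pos (by omega)]
  have h4 : fZ L (-1) = 1 := by
    have := S.Lneg1
    simp only [fZ, neg_eq_zero, one_ne_zero, if_false]
    rw [if_pos (by omega)]
  simp only [neg_mul_neg] at h
  rw [h, h2, h3, h4]; ring

/-- `J(χ²,χ²) ≡ 3 (mod 8)`. -/
lemma s_mod (S : CycSetup p α L e χ ζ) [hp : Fact p.Prime] [CharP F p] (s : ℤ)
    (hs : jacobiSum (χ ^ 2) (χ ^ 2) = (s : ℂ)) : s % 4 = 3 := by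
  have h1 := S.oZ_corr s hs
  have h2 := S.fZ_count'
  have h3 : ∀ x, (oZ L x * oZ L (x - 1) : ℤ) =
      2 * (if oZ L x * oZ L (x - 1) = 1 then 1 else 0) -
      (if -fZ L x = 1 ∧ -fZ L (x - 1) = 1 then 1 else 0) := by
    have h0 : ∀ x, (-fZ L x = 1 ∧ (oZ L x = 1 ∨ oZ L x = -1)) ∨ (-fZ L x ≠ 1 ∧ oZ L x = 0) := by
      intro x
      unfold fZ oZ
      split_ifs <;> omega
    intro x
    rcases h0 x with ⟨a, b | b⟩ | ⟨a, b⟩ <;> rcases h0 (x - 1) with ⟨a', b' | b'⟩ | ⟨a', b'⟩ <;>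
      simp [a, b, a', b']
  have hev : (2 : ℤ) ∣ ((univ.filter (fun x => oZ L x * oZ L (x - 1) = 1)).card : ℤ) := by
    have : (((univ.filter (fun x => oZ L x * oZ L (x - 1) = 1)).card : ℕ) : ZMod 2) = 0 := by
      rw [Finset.cast_card]
      refine Finset.sum_involution (fun x _ => 1 - x) ?_ ?_ ?_ ?_
      · intro x _; decide
      · intro x hx _ hxe
        rw [Finset.mem_filter] at hx
        have hx2 : 2 * x = 1 := by linear_combination -hxe
        have hx0 : x ≠ 0 := by rintro rfl; simp at hx2
        have hl := S.Lmul 2 x S.h20 hx0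
        have hL1 : L 1 % 8 = 0 := by have := S.Lpow 0; simpa using this
        rw [hx2] at hl
        have := S.h2
        have ho : oZ L x = 0 := by
          simp only [oZ, hx0, if_false]
          rw [if_neg (by omega), if_neg (by omega)]
        rw [ho] at hx
        simp at hx
      · intro x hx
        have ho : ∀ y, oZ L (-y) = oZ L y := by
          intro y
          by_cases hy : y = 0
          · simp [hy]
          · have := S.Lneg y hy
            simp only [oZ, neg_eq_zero, hy, if_false]
            split_ifs <;> first | rfl | omega
        rw [Finset.mem_filter] at hx ⊢
        refine ⟨mem_univ _, ?_⟩
        rw [show (1 : F) - x = -(x - 1) by ring, ho, show -(x - 1) - 1 = -x by ring, ho, mul_comm]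
        exact hx.2
      · intro x _; ring
    have := (ZMod.natCast_eq_zero_iff _ _).1 this
    exact_mod_cast this
  have h4 := Finset.sum_congr (rfl : (univ : Finset F) = univ) (fun x _ => h3 x)
  rw [Finset.sum_sub_distrib, ← Finset.mul_sum] at h4
  simp only [← Finset.natCast_card_filter] at h4
  rw [S.card] at h2
  have := S.eodd
  push_cast at h2
  omega

end CycSetup

lemma aux_half {F : Type*} [Field F] [Fintype F] [DecidableEq F] (f : F → ℤ) (h0 : f 0 = 0)
    (h1 : ∀ x, x ≠ 0 → f x = 1 ∨ f x = -1) (hs : ∑ x, f x = 0) :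
    2 * ((univ.filter (fun x => f x = 1)).card : ℤ) = (Fintype.card F : ℤ) - 1 := by
  have key : ∀ x, (2 * (if f x = 1 then 1 else 0) : ℤ) = 1 - (if x = 0 then 1 else 0) + f x := by
    intro x
    by_cases hx : x = 0
    · subst hx; simp [h0]
    · rcases h1 x hx with h | h <;> simp [h, hx]
  rw [Finset.card_filter]
  push_cast
  rw [Finset.mul_sum, Finset.sum_congr rfl (fun x _ => key x)]
  simp only [Finset.sum_add_distrib, Finset.sum_sub_distrib, hs]
  simp

lemma aux_intDiff_eq {F : Type*} [Field F] [Fintype F] [DecidableEq F] (D A : Finset F) (lam mu : ℕ)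
    (h : ∀ z : F, z ≠ 0 → (univ.filter (fun x => x ∈ D ∧ x - z ∈ D)).card =
      if z ∈ A then lam else mu) :
    intDiff D = lam • (A.erase 0).val + mu • (Gstar F \ A).val := by
  ext z
  rw [aux_count_intDiff, Multiset.count_add, Multiset.count_nsmul, Multiset.count_nsmul,
    Multiset.count_eq_of_nodup (Finset.nodup _), Multiset.count_eq_of_nodup (Finset.nodup _)]
  simp only [Finset.mem_val, Gstar, Finset.mem_erase, Finset.mem_sdiff, mem_univ, and_true]
  by_cases hz : z = 0
  · simp [hz]
  · rw [if_neg hz, h z hz]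
    by_cases hA : z ∈ A <;> simp [hz, hA]

namespace CycSetup

variable {F : Type*} [Field F] [Fintype F] [DecidableEq F] {p : ℕ} {α : F} {L : F → ℕ}
  {e : ℕ} {χ : MulChar F ℂ} {ζ : ℂ}

lemma L_one (S : CycSetup p α L e χ ζ) : L 1 % 8 = 0 := by have := S.Lpow 0; simpa using this

lemma not_dvd_u (S : CycSetup p α L e χ ζ) [hp : Fact p.Prime] [CharP F p] (u v : ℤ) (t : ℕ)
    (ht : t ≠ 0) (hqt : 8 * e + 1 = p ^ (2 * t))
    (hu : u = (nJ L 0 : ℤ) - nJ L 4) (hv : v = (nJ L 1 : ℤ) - nJ L 5)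
    (huv : u ^ 2 + 2 * v ^ 2 = (p : ℤ) ^ (2 * t)) : ¬ (p : ℤ) ∣ u := by
  intro hd
  have hpp : Prime (p : ℤ) := Nat.prime_iff_prime_int.1 hp.out
  have hp8 := S.p8
  have hdv : (p : ℤ) ∣ v := by
    have h1 : (p : ℤ) ∣ 2 * v ^ 2 := by
      have : 2 * v ^ 2 = (p : ℤ) ^ (2 * t) - u * u := by rw [← huv]; ring
      rw [this]
      exact dvd_sub (dvd_pow_self _ (by omega)) (Dvd.dvd.mul_left hd _)
    rcases hpp.dvd_or_dvd h1 with h | h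
    · exfalso
      have : p ∣ 2 := by exact_mod_cast h
      have := Nat.le_of_dvd (by norm_num) this
      interval_cases p <;> omega
    · exact hpp.dvd_of_dvd_pow h
  have he : 0 < e := by have := S.eodd; omega
  have hneg : α ^ (4 * e) = -1 := by
    have h1 : α ^ (8 * e) = 1 := by
      have := FiniteField.pow_card_sub_one_eq_one α S.hα0
      rwa [S.card, Nat.add_sub_cancel] at this
    have h2 : (α ^ (4 * e)) ^ 2 = 1 := by rw [← pow_mul, ← h1]; ring_nf
    have h3 := S.eodd
    have h4 : α ^ (4 * e) = 1 ∨ α ^ (4 * e) = -1 := by simpa using h2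
    rcases h4 with h | h
    · have := S.hα (4 * e) 0 (by rw [h, pow_zero])
      omega
    · exact h
  have hsum := aux_nJ_sum p S.p8 α L S.hL S.hα (α ^ (5 * e))
    (by rw [← pow_mul, show 5 * e * 4 = 4 * e * 5 by ring, pow_mul, hneg]; norm_num)
    (fun x : F => x ^ (5 * e)) (zero_pow (by omega))
    (by intro n; simp only [← pow_mul]; ring_nf)
  rw [← hu, ← hv, (CharP.intCast_eq_zero_iff F p u).2 hd, (CharP.intCast_eq_zero_iff F p v).2 hdv,
    zero_mul, zero_add] at hsum
  have h7 : ∀ y : F, (y ^ (5 * e)) ^ 3 = y ^ (7 * e) := by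
    intro y
    by_cases hy : y = 0
    · subst hy; rw [zero_pow (by omega), zero_pow (by omega), zero_pow (by omega)]
    · have := FiniteField.pow_card_sub_one_eq_one y hy
      rw [S.card, Nat.add_sub_cancel] at this
      rw [← pow_mul, show 5 * e * 3 = 8 * e + 7 * e by ring, pow_add, this, one_mul]
  simp only [h7] at hsum
  rw [aux_powsum e he S.card, neg_eq_zero] at hsum
  rcases mul_eq_zero.1 hsum with h | h
  · exact pow_ne_zero _ (by simp) h
  · exact aux_lucas (p / 8) p hp.out (by omega) t e hqt ((CharP.cast_eq_zero_iff F p _).1 h)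

lemma values (S : CycSetup p α L e χ ζ) [hp : Fact p.Prime] [CharP F p] (t : ℕ)
    (ht : t ≠ 0) (hqt : 8 * e + 1 = p ^ (2 * t)) (x a b : ℤ) (hx : x ^ 2 = (p : ℤ) ^ (2 * t))
    (hab : a ^ 2 + 2 * b ^ 2 = (p : ℤ) ^ (2 * t)) (ha4 : a % 4 = 1) (hxa : a = x + 4) :
    ∃ u s T : ℤ, u = (nJ L 0 : ℤ) - nJ L 4 ∧ jacobiSum (χ ^ 2) (χ ^ 2) = (s : ℂ) ∧
      jacobiSum (χ ^ 1) (χ ^ 5) = (T : ℂ) ∧ u + s = 4 ∧ u + T = 4 := by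
  have hpp : Prime (p : ℤ) := Nat.prime_iff_prime_int.1 hp.out
  have hp8 := S.p8
  have hqx : (Fintype.card F : ℂ) = (x : ℂ) ^ 2 := by
    have h : ((Fintype.card F : ℤ)) = x ^ 2 := by rw [hx, S.card, hqt]; push_cast; rfl
    exact_mod_cast congrArg (fun n : ℤ => (n : ℂ)) h
  have hs : ∃ s : ℤ, (s = x ∨ s = -x) ∧ jacobiSum (χ ^ 2) (χ ^ 2) = (s : ℂ) := by
    have h := S.J_norm 2 2 6 6 (by norm_num) (by norm_num) (by norm_num) (by norm_num) (by norm_num)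
    rw [S.J_frob 2 2 6 6 (by norm_num) (by norm_num), ← sq, hqx] at h
    rcases sq_eq_sq_iff_eq_or_eq_neg.1 h with h | h
    · exact ⟨x, Or.inl rfl, h⟩
    · exact ⟨-x, Or.inr rfl, by rw [h]; push_cast; rfl⟩
  have hT : ∃ s : ℤ, (s = x ∨ s = -x) ∧ jacobiSum (χ ^ 1) (χ ^ 5) = (s : ℂ) := by
    have h := S.J_norm 1 5 7 3 (by norm_num) (by norm_num) (by norm_num) (by norm_num) (by norm_num)
    rw [jacobiSum_comm (χ ^ 7), S.J_frob 1 5 3 7 (by norm_num) (by norm_num), ← sq, hqx] at h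
    rcases sq_eq_sq_iff_eq_or_eq_neg.1 h with h | h
    · exact ⟨x, Or.inl rfl, h⟩
    · exact ⟨-x, Or.inr rfl, by rw [h]; push_cast; rfl⟩
  obtain ⟨s, hsx, hs⟩ := hs
  obtain ⟨T, hTx, hT⟩ := hT
  have hs4 := S.s_mod s hs
  obtain ⟨u, hu⟩ : ∃ u : ℤ, u = (nJ L 0 : ℤ) - nJ L 4 := ⟨_, rfl⟩
  obtain ⟨v, hv⟩ : ∃ v : ℤ, v = (nJ L 1 : ℤ) - nJ L 5 := ⟨_, rfl⟩
  have huv : u ^ 2 + 2 * v ^ 2 = (p : ℤ) ^ (2 * t) := by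
    have h := S.J_norm 1 3 7 5 (by norm_num) (by norm_num) (by norm_num) (by norm_num) (by norm_num)
    rw [jacobiSum_comm (χ ^ 7), S.J13, S.J57, ← hu, ← hv, hqx] at h
    have h' : (((u ^ 2 + 2 * v ^ 2 : ℤ)) : ℂ) = ((x ^ 2 : ℤ) : ℂ) := by
      push_cast
      rw [← h]
      linear_combination (v : ℂ) ^ 2 * (ζ ^ 2 + 2) * S.hζ
    rw [← hx]
    exact_mod_cast h'
  have hpu := S.not_dvd_u u v t ht hqt hu hv huv
  have hp2 : p ≠ 2 := by rintro rfl; omega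
  have hpa : ¬ (p : ℤ) ∣ a := by
    intro h
    have h1 : (p : ℤ) ∣ x := by
      apply hpp.dvd_of_dvd_pow (n := 2)
      rw [hx]; exact dvd_pow_self _ (by omega)
    have h2 : (p : ℤ) ∣ 4 := by
      have := dvd_sub h h1
      rwa [hxa, show x + 4 - x = 4 by ring] at this
    have h3 : p ∣ 2 ^ 2 := by exact_mod_cast h2
    exact hp2 ((Nat.prime_dvd_prime_iff_eq hp.out Nat.prime_two).1 (hp.out.dvd_of_dvd_pow h3))
  have hua := aux_unique p (2 * t) hp.out hp2 u v a b huv hab (by omega) hpu hpa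
  have c1 := S.gZ_count u s T hu hs hT 1 one_ne_zero
  have c2 := S.gZ_count u s T hu hs hT α S.hα0
  have l1 := S.L_one
  have l2 := S.Lneg1
  have l3 : L α % 8 = 1 := by have := S.Lpow 1; simpa using this
  have l4 := S.Lneg α S.hα0
  have g1 : gZ L 1 = 1 := by simp [gZ, l1]
  have g2 : gZ L (-1) = -1 := by simp [gZ, l2]
  have f1 : fZ L 1 = 1 := by simp only [fZ, one_ne_zero, if_false]; rw [if_pos (by omega)]
  have o1 : oZ L 1 = 0 := by
    simp only [oZ, one_ne_zero, if_false]; rw [if_neg (by omega), if_neg (by omega)]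
  have g3 : gZ L α = 1 := by simp [gZ, l3, S.hα0]
  have g4 : gZ L (-α) = 1 := by
    simp only [gZ, neg_eq_zero, S.hα0, if_false]; rw [if_pos (by omega)]
  have f2 : fZ L α = -1 := by simp only [fZ, S.hα0, if_false]; rw [if_neg (by omega)]
  have o2 : oZ L α = 1 := by simp only [oZ, S.hα0, if_false]; rw [if_pos (by omega)]
  rw [g1, g2, f1, o1, S.card] at c1
  rw [g3, g4, f2, o2, S.card] at c2
  push_cast at c1 c2
  refine ⟨u, s, T, hu, hs, hT, ?_, ?_⟩ <;> omega

end CycSetup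

lemma aux_setup {F : Type*} [Field F] [Fintype F] [DecidableEq F]
    (p t : ℕ) (hp : p.Prime) (hp8 : p % 8 = 3) (ht : t % 2 = 1)
    (hq : Fintype.card F = p ^ (2 * t)) [CharP F p] (α : F) (hα : IsPrimitiveElt α) :
    ∃ (L : F → ℕ) (e : ℕ) (χ : MulChar F ℂ) (ζ : ℂ), CycSetup p α L e χ ζ ∧
      ∀ x, x ≠ 0 → L x < Fintype.card F := by
  have hfact : Fact p.Prime := ⟨hp⟩
  have hcard16 : Fintype.card F % 16 = 9 := by
    have h1 : p ^ 2 % 16 = 9 := by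
      have : p % 16 = 3 ∨ p % 16 = 11 := by omega
      rw [Nat.pow_mod]
      rcases this with h | h <;> rw [h]
    obtain ⟨r, rfl⟩ : ∃ r, t = 2 * r + 1 := ⟨t / 2, by omega⟩
    rw [hq, pow_mul, Nat.pow_mod, h1, pow_succ, pow_mul, Nat.mul_mod, Nat.pow_mod]
    norm_num
  obtain ⟨e, he⟩ : ∃ e, Fintype.card F = 8 * e + 1 := ⟨Fintype.card F / 8, by omega⟩
  have heodd : e % 2 = 1 := by omega
  have hp2 : p ≠ 2 := by rintro rfl; omega
  have h20 : (2 : F) ≠ 0 := by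
    intro h
    have : ((2 : ℕ) : F) = 0 := by exact_mod_cast h
    rw [CharP.cast_eq_zero_iff F p] at this
    exact hp2 ((Nat.prime_dvd_prime_iff_eq hp Nat.prime_two).1 this)
  have hα0 : α ≠ 0 := by
    rintro rfl
    obtain ⟨n, hn⟩ := hα 2 h20
    obtain ⟨k, hk⟩ := hα (-1) (by simp)
    have hz : ∀ k : ℕ, (0 : F) ^ k = 0 ∨ (0 : F) ^ k = 1 := by
      intro k
      rcases Nat.eq_zero_or_pos k with h | h
      · right; rw [h, pow_zero]
      · left; exact zero_pow h.ne'
    rcases hz k with h | h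
    · rw [h] at hk; exact (by simp : (-1 : F) ≠ 0) hk.symm
    · rw [h] at hk; apply h20; linear_combination hk
  have hgen : ∀ x : Fˣ, x ∈ Subgroup.zpowers (Units.mk0 α hα0) := by
    intro x
    obtain ⟨n, hn⟩ := hα x x.ne_zero
    exact ⟨n, by ext; simpa using hn⟩
  have hcardu : Fintype.card Fˣ = 8 * e := by rw [Fintype.card_units, he, Nat.add_sub_cancel]
  have hord : orderOf α = 8 * e := by
    have := orderOf_eq_card_of_forall_mem_zpowers hgen
    rw [Nat.card_eq_fintype_card, hcardu, ← orderOf_units] at this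
    simpa using this
  have hex : ∀ x : F, ∃ n : ℕ, x ≠ 0 → α ^ n = x ∧ n < Fintype.card F := by
    intro x
    by_cases hx : x = 0
    · exact ⟨0, fun h => absurd hx h⟩
    · obtain ⟨n, hn⟩ := hα x hx
      refine ⟨n % (8 * e), fun _ => ⟨?_, ?_⟩⟩
      · rw [← hord, pow_mod_orderOf, hn]
      · have := Nat.mod_lt n (show 8 * e > 0 by omega)
        omega
  choose L hL using hex
  have hζ4 : (Complex.exp (Real.pi * Complex.I / 4)) ^ 4 = -1 := by
    rw [← Complex.exp_nat_mul, show ((4 : ℕ) : ℂ) * (Real.pi * Complex.I / 4) = Real.pi * Complex.I by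
      push_cast; ring, Complex.exp_pi_mul_I]
  let ζu : ℂˣ := Units.mk0 (Complex.exp (Real.pi * Complex.I / 4)) (Complex.exp_ne_zero _)
  have hζu : ζu ∈ rootsOfUnity (Fintype.card Fˣ) ℂ := by
    rw [mem_rootsOfUnity, hcardu]
    ext
    simp only [Units.val_pow_eq_pow_val, Units.val_one, ζu, Units.val_mk0]
    rw [show 8 * e = 4 * (2 * e) by ring, pow_mul, hζ4]
    simp
  have hmod : ∀ n m : ℕ, α ^ n = α ^ m → n ≡ m [MOD 8 * e] := by
    intro n m h
    rw [← hord]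
    have hu : (Units.mk0 α hα0) ^ n = (Units.mk0 α hα0) ^ m := by ext; simpa using h
    have := pow_eq_pow_iff_modEq.1 hu
    rw [← orderOf_units] at this
    simpa using this
  refine ⟨L, e, MulChar.ofRootOfUnity hζu hgen, Complex.exp (Real.pi * Complex.I / 4),
    ⟨hp8, he, heodd, hα0, fun x hx => (hL x hx).1, ?_, hζ4, ?_, h20, ?_⟩, fun x hx => (hL x hx).2⟩
  · intro n m h
    exact (hmod n m h).of_mul_right e
  · exact MulChar.ofRootOfUnity_spec hζu hgen
  · have hfr : (2 : F) ^ (p - 1) = 1 := by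
      have h1 : (2 : F) ^ p = 2 := by
        have := map_natCast (frobenius F p) 2
        rw [frobenius_def] at this
        exact_mod_cast this
      have h2 : (2 : F) ^ (p - 1) * 2 = 1 * 2 := by
        rw [← pow_succ, Nat.sub_add_cancel hp.one_le, h1, one_mul]
      exact mul_right_cancel₀ h20 h2
    obtain ⟨k, hk⟩ : ∃ k, p = 8 * k + 3 := ⟨p / 8, by omega⟩
    have hdvd : p ^ 2 - 1 ∣ 8 * e := by
      have : 8 * e = (p ^ 2) ^ t - 1 ^ t := by rw [← pow_mul, ← hq, he, one_pow, Nat.add_sub_cancel]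
      rw [this]
      exact Nat.sub_dvd_pow_sub_pow _ _ _
    have h2e : p - 1 ∣ 2 * e := by
      obtain ⟨c, hc⟩ := hdvd
      have e1 : p ^ 2 - 1 = 8 * ((4 * k + 1) * (2 * k + 1)) := by
        have : p ^ 2 = 8 * ((4 * k + 1) * (2 * k + 1)) + 1 := by rw [hk]; ring
        omega
      rw [e1, mul_assoc] at hc
      have hc' := Nat.eq_of_mul_eq_mul_left (by norm_num) hc
      refine ⟨(2 * k + 1) * c, ?_⟩
      rw [hc', show p - 1 = 2 * (4 * k + 1) by omega]; ring
    obtain ⟨d, hd⟩ := h2e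
    have h3 : α ^ (L 2 * (2 * e)) = α ^ 0 := by
      rw [pow_mul, (hL 2 h20).1, hd, pow_mul, hfr, one_pow, pow_zero]
    have h4 := (Nat.modEq_zero_iff_dvd).1 (hmod _ _ h3)
    rw [show 8 * e = 4 * (2 * e) by ring] at h4
    have := Nat.dvd_of_mul_dvd_mul_right (by omega) h4
    omega

lemma aux_mem_cyc {F : Type*} [Field F] [Fintype F] [DecidableEq F] {p : ℕ} {α : F} {L : F → ℕ}
    {e : ℕ} {χ : MulChar F ℂ} {ζ : ℂ} (S : CycSetup p α L e χ ζ)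
    (hLt : ∀ x, x ≠ 0 → L x < Fintype.card F) (d i : ℕ) (hd : d ∣ 8) (hi : i < d) (x : F) :
    x ∈ cycClass α d i ↔ x ≠ 0 ∧ L x % d = i := by
  unfold cycClass
  simp only [Finset.mem_image, Finset.mem_range]
  constructor
  · rintro ⟨j, _, rfl⟩
    refine ⟨pow_ne_zero _ S.hα0, ?_⟩
    have h := S.Lpow (d * j + i)
    have h' : L (α ^ (d * j + i)) % d = (d * j + i) % d := Nat.ModEq.of_dvd hd h
    rw [h', Nat.mul_add_mod, Nat.mod_eq_of_lt hi]
  · rintro ⟨hx, h⟩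
    refine ⟨L x / d, lt_of_le_of_lt (Nat.div_le_self _ _) (hLt x hx), ?_⟩
    rw [← h, Nat.div_add_mod, S.hL x hx]

/-- Let `q = p^m` with `p ≡ 3 (mod 8)` prime and `m ≡ 2 (mod 4)`; let
`x, a, b` be integers with `x² = q`, `q = a² + 2b²`, `a ≡ 1 (mod 4)` and `a = x + 4`.
Then `D = C_0^8 ∪ C_1^8 ∪ C_2^8 ∪ C_5^8` is a skew Paley
`(q,(q-1)/2,(q-5)/4,(q-1)/4)`-PDS corresponding to `C_0^2`; that is,
`Δ(D) = ((q-5)/4) • C_0^2 + ((q-1)/4) • C_1^2`. -/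
theorem stmt_6 {F : Type*} [Field F] [Fintype F] [DecidableEq F]
    (q p m : ℕ) (hp : p.Prime) (hp8 : p % 8 = 3) (hm : m % 4 = 2)
    (hq : Fintype.card F = q) (hqpm : q = p ^ m)
    (α : F) (hα : IsPrimitiveElt α)
    (x a b : ℤ) (hx : x ^ 2 = (q : ℤ)) (hab : (q : ℤ) = a ^ 2 + 2 * b ^ 2)
    (ha4 : a % 4 = 1) (hxa : a = x + 4) :
    IsSkewPDS (cycClass α 8 0 ∪ cycClass α 8 1 ∪ cycClass α 8 2 ∪ cycClass α 8 5)
        (cycClass α 2 0) q ((q - 1) / 2) ((q - 5) / 4) ((q - 1) / 4) ∧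
    intDiff (cycClass α 8 0 ∪ cycClass α 8 1 ∪ cycClass α 8 2 ∪ cycClass α 8 5) =
      ((q - 5) / 4) • (cycClass α 2 0).val + ((q - 1) / 4) • (cycClass α 2 1).val := by
  obtain ⟨t, ht, hmt⟩ : ∃ t, t % 2 = 1 ∧ m = 2 * t := ⟨m / 2, by omega, by omega⟩
  subst hmt
  have hfact : Fact p.Prime := ⟨hp⟩
  have hchar : CharP F p := charP_of_card_eq_prime_pow (f := 2 * t) (by rw [hq, hqpm])
  obtain ⟨L, e, χ, ζ, S, hLt⟩ := aux_setup p t hp hp8 ht (by rw [hq, hqpm]) α hα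
  have hcard := S.card
  have hqe : q = 8 * e + 1 := by rw [← hq, hcard]
  have heodd := S.eodd
  obtain ⟨u, s, T, hu, hs, hT, hus, huT⟩ := S.values t (by omega) (by rw [← hqe, hqpm]) x a b
    (by rw [hx, hqpm]; push_cast; rfl) (by rw [← hab, hqpm]; push_cast; rfl) ha4 hxa
  have m2 : ∀ i, i < 2 → ∀ x, x ∈ cycClass α 2 i ↔ x ≠ 0 ∧ L x % 2 = i :=
    fun i hi x => aux_mem_cyc S hLt 2 i (by norm_num) hi x
  have m8 : ∀ i, i < 8 → ∀ x, x ∈ cycClass α 8 i ↔ x ≠ 0 ∧ L x % 8 = i :=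
    fun i hi x => aux_mem_cyc S hLt 8 i (by norm_num) hi x
  have hA : cycClass α 2 0 = univ.filter (fun x => fZ L x = 1) := by
    ext x
    rw [m2 0 (by norm_num), Finset.mem_filter]
    unfold fZ
    split_ifs with h h2
    · simp [h]
    · simp [h, h2]
    · simp [h, h2]
  have hD : cycClass α 8 0 ∪ cycClass α 8 1 ∪ cycClass α 8 2 ∪ cycClass α 8 5 =
      univ.filter (fun x => gZ L x = 1) := by
    ext x
    simp only [Finset.mem_union, m8 0 (by norm_num), m8 1 (by norm_num), m8 2 (by norm_num),
      m8 5 (by norm_num), Finset.mem_filter, mem_univ, true_and]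
    unfold gZ
    split_ifs with h h'
    · simp [h]
    · simp only [ne_eq, h, not_false_eq_true, true_and, iff_true]; tauto
    · simp only [ne_eq, h, not_false_eq_true, true_and]
      constructor
      · intro h''; exact absurd (by tauto) h'
      · intro h''; norm_num at h''
  have hcompl : Gstar F \ cycClass α 2 0 = cycClass α 2 1 := by
    ext x
    rw [Finset.mem_sdiff, m2 0 (by norm_num), m2 1 (by norm_num)]
    simp only [Gstar, Finset.mem_erase, mem_univ, and_true]
    constructor
    · rintro ⟨h, h'⟩
      exact ⟨h, by by_contra h2; exact h' ⟨h, by omega⟩⟩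
    · rintro ⟨h, h'⟩
      exact ⟨h, fun h2 => by omega⟩
  have herase : (cycClass α 2 0).erase 0 = cycClass α 2 0 := by
    apply Finset.erase_eq_of_notMem
    rw [m2 0 (by norm_num)]; simp
  have hf1 : ∀ x, x ≠ 0 → fZ L x = 1 ∨ fZ L x = -1 := by
    intro x hx; simp only [fZ, hx, if_false]; split_ifs <;> simp
  have hg1 : ∀ x, x ≠ 0 → gZ L x = 1 ∨ gZ L x = -1 := by
    intro x hx; simp only [gZ, hx, if_false]; split_ifs <;> simp
  have hmain : intDiff (cycClass α 8 0 ∪ cycClass α 8 1 ∪ cycClass α 8 2 ∪ cycClass α 8 5) =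
      ((q - 5) / 4) • ((cycClass α 2 0).erase 0).val +
        ((q - 1) / 4) • (Gstar F \ cycClass α 2 0).val := by
    apply aux_intDiff_eq
    intro z hz
    have hc := S.gZ_count u s T hu hs hT z hz
    rw [hD]
    simp only [Finset.mem_filter, mem_univ, true_and, m2 0 (by norm_num) z, hz, ne_eq,
      not_false_eq_true]
    rw [hus, huT, hcard] at hc
    have hln := S.Lneg z hz
    unfold fZ at hc
    have hgz : gZ L z = if L z % 8 = 0 ∨ L z % 8 = 1 ∨ L z % 8 = 2 ∨ L z % 8 = 5 then 1 else -1 := by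
      simp only [gZ, hz, if_false]
    have hgz' : gZ L (-z) = if L (-z) % 8 = 0 ∨ L (-z) % 8 = 1 ∨ L (-z) % 8 = 2 ∨ L (-z) % 8 = 5
        then 1 else -1 := by
      simp only [gZ, neg_eq_zero, hz, if_false]
    rw [hgz, hgz', oZ, if_neg hz, if_neg hz] at hc
    push_cast at hc
    split_ifs at hc ⊢ <;> omega
  refine ⟨⟨⟨hq, ?_, ?_⟩, ?_, hmain⟩, ?_⟩
  · have := aux_half (fZ L) (by simp [fZ]) hf1 S.fZ_sum
    rw [hA]; rw [hcard] at this; push_cast at this; omega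
  · apply aux_intDiff_eq
    intro z hz
    have hc := S.fZ_count z hz
    have hmem := m2 0 (by norm_num) z
    simp only [hmem]
    rw [hA]
    simp only [Finset.mem_filter, mem_univ, true_and, hz, ne_eq, not_false_eq_true]
    rw [hcard] at hc
    rw [show fZ L z = if L z % 2 = 0 then 1 else -1 by simp only [fZ, hz, if_false]] at hc
    push_cast at hc
    split_ifs at hc ⊢ <;> omega
  · have := aux_half (gZ L) (by simp [gZ]) hg1 S.gZ_sum
    rw [hD]; rw [hcard] at this; push_cast at this; omega
  · rw [hmain, herase, hcompl]
end

section
/- Let q = ℓ² where ℓ = d² + 2 ≡ 3 (mod 8) is a prime power and d is an integer. Then, in F_q, the set D = C_0^8 ∪ C_1^8 ∪ C_2^8 ∪ C_5^8 is a skew Paley (q,(q−1)/2,(q−5)/4,(q−1)/4)-PDS corresponding to the Paley PDS C_0^2. -/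
open Finset

set_option linter.unusedSectionVars false

section Plane

variable {K F R : Type*} [Field K] [Fintype K] [DecidableEq K] [Field F] [Fintype F]
  [Algebra K F] [CommRing R]

lemma sum_plane (hcard : Fintype.card F = Fintype.card K ^ 2) (w z : F)
    (hwz : ∀ u v : K, u • w + v • z = 0 → u = 0 ∧ v = 0) (f : F → R) :
    ∑ x, f x = ∑ u : K, ∑ v : K, f (u • w + v • z) := by
  rw [← Fintype.sum_prod_type']
  symm
  refine Fintype.sum_bijective (fun p : K × K => p.1 • w + p.2 • z) ?_ _ _ (fun _ => rfl)
  rw [Fintype.bijective_iff_injective_and_card]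
  refine ⟨?_, by rw [Fintype.card_prod, hcard, sq]⟩
  rintro ⟨a, b⟩ ⟨c, e⟩ h
  have := hwz (a - c) (b - e) (by
    simp only at h
    rw [sub_smul, sub_smul]
    linear_combination h)
  exact Prod.ext (sub_eq_zero.1 this.1) (sub_eq_zero.1 this.2)

lemma sum_plane' (hcard : Fintype.card F = Fintype.card K ^ 2) (w z : F)
    (hwz : ∀ u v : K, u • w + v • z = 0 → u = 0 ∧ v = 0) (f : F → R) :
    ∑ x, f x = ∑ v : K, f (v • z) +
      ∑ u ∈ univ.erase (0 : K), ∑ v : K, f (u • (w + v • z)) := by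
  rw [sum_plane hcard w z hwz, ← Finset.add_sum_erase univ _ (mem_univ (0 : K))]
  congr 1
  · simp
  · refine Finset.sum_congr rfl fun u hu => ?_
    have hu0 : u ≠ 0 := (Finset.mem_erase.1 hu).1
    symm
    refine Fintype.sum_equiv (Equiv.mulLeft₀ u hu0) _ _ fun v => ?_
    simp [smul_add, mul_smul]

/-- Sum of a `K^*`-invariant function over all of `F`, via a line. -/
lemma sum_inv (hcard : Fintype.card F = Fintype.card K ^ 2) (w z : F)
    (hwz : ∀ u v : K, u • w + v • z = 0 → u = 0 ∧ v = 0) (f : F → R) (h0 : f 0 = 0)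
    (hf : ∀ u : K, u ≠ 0 → ∀ x, f (u • x) = f x) :
    ∑ x, f x = ((Fintype.card K : R) - 1) * (∑ v : K, f (w + v • z) + f z) := by
  have hc : (((univ.erase (0 : K)).card : ℕ) : R) = (Fintype.card K : R) - 1 := by
    rw [Finset.card_erase_of_mem (mem_univ _), Finset.card_univ,
      Nat.cast_sub Fintype.card_pos, Nat.cast_one]
  rw [sum_plane' hcard w z hwz, ← Finset.add_sum_erase univ _ (mem_univ (0 : K)), zero_smul, h0]
  have e1 : ∑ v ∈ univ.erase (0 : K), f (v • z) = ((Fintype.card K : R) - 1) * f z := by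
    rw [Finset.sum_congr rfl (fun v hv => hf v (Finset.mem_erase.1 hv).1 z),
      Finset.sum_const, nsmul_eq_mul, hc]
  have e2 : ∑ u ∈ univ.erase (0 : K), ∑ v : K, f (u • (w + v • z)) =
      ((Fintype.card K : R) - 1) * ∑ v : K, f (w + v • z) := by
    rw [Finset.sum_congr rfl (fun u hu => Finset.sum_congr rfl
      (fun v _ => hf u (Finset.mem_erase.1 hu).1 (w + v • z))),
      Finset.sum_const, nsmul_eq_mul, hc]
  rw [e1, e2]; ring

lemma corr (hcard : Fintype.card F = Fintype.card K ^ 2) (w z : F)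
    (hwz : ∀ u v : K, u • w + v • z = 0 → u = 0 ∧ v = 0) (f g : F → R) (κ : K → ℤ)
    (hκ : ∀ u, u ≠ 0 → κ u * κ u = 1)
    (hf : ∀ (u : K) x, f (u • x) = κ u * f x) (hg : ∀ (u : K) x, g (u • x) = κ u * g x) :
    ∑ x, f x * g (x + z) = (∑ v : K, f (w + v • z)) * (∑ v : K, g (w + v • z))
      - ∑ v : K, f (w + v • z) * g (w + v • z)
      + f z * g z * ((∑ t : K, κ t * κ (t + 1) : ℤ) : R) := by
  rw [sum_plane' hcard w z hwz]
  have e1 : ∑ v : K, f (v • z) * g (v • z + z) =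
      f z * g z * ((∑ t : K, κ t * κ (t + 1) : ℤ) : R) := by
    push_cast
    rw [Finset.mul_sum]
    refine Finset.sum_congr rfl fun v _ => ?_
    have : v • z + z = (v + 1) • z := by rw [add_smul, one_smul]
    rw [this, hf, hg]; ring
  have e2 : ∑ u ∈ univ.erase (0 : K), ∑ v : K, f (u • (w + v • z)) * g (u • (w + v • z) + z)
      = ∑ u ∈ univ.erase (0 : K), ∑ v : K, f (w + v • z) * g (w + (v + u) • z) := by
    refine Finset.sum_bij' (fun u _ => u⁻¹) (fun u _ => u⁻¹) ?_ ?_ ?_ ?_ ?_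
    · intro u hu; simpa using hu
    · intro u hu; simpa using hu
    · intro u _; simp
    · intro u _; simp
    · intro u hu
      have hu0 : u ≠ 0 := (Finset.mem_erase.1 hu).1
      refine Finset.sum_congr rfl fun v _ => ?_
      have : u • (w + v • z) + z = u • (w + (v + u⁻¹) • z) := by
        rw [add_smul, ← add_assoc, smul_add u (w + v • z), smul_smul, mul_inv_cancel₀ hu0, one_smul]
      rw [this, hf, hg]
      have h1 : ((κ u : ℤ) : R) * κ u = 1 := by exact_mod_cast congrArg (Int.cast (R := R)) (hκ u hu0)
      linear_combination (f (w + v • z) * g (w + (v + u⁻¹) • z)) * h1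
  have e3 : ∑ u : K, ∑ v : K, f (w + v • z) * g (w + (v + u) • z)
      = (∑ v : K, f (w + v • z)) * (∑ v : K, g (w + v • z)) := by
    rw [Finset.sum_comm, Finset.sum_mul]
    refine Finset.sum_congr rfl fun v _ => ?_
    rw [Finset.mul_sum]
    exact Fintype.sum_equiv (Equiv.addLeft v) _ _ fun u => rfl
  rw [← Finset.add_sum_erase univ _ (mem_univ (0 : K))] at e3
  simp only [add_zero] at e3
  rw [e1, e2, ← e3]
  ring

/-- `∑ κ(t) κ(t+1) = -1` for an odd quadratic character. -/
lemma sum_kappa (κ : K → ℤ) (h0 : κ 0 = 0) (hκ : ∀ u, u ≠ 0 → κ u * κ u = 1)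
    (hm : ∀ u v, κ (u * v) = κ u * κ v) (h1 : κ (-1) = -1) :
    ∑ t : K, κ t * κ (t + 1) = -1 := by
  have hs : ∑ t, κ t = 0 := by
    have : ∑ t, κ t = ∑ t, κ (-t) := (Fintype.sum_equiv (Equiv.neg K) _ _ fun u => rfl).symm
    have h2 : ∑ t, κ (-t) = - ∑ t, κ t := by
      rw [← Finset.sum_neg_distrib]
      refine Finset.sum_congr rfl fun t _ => ?_
      rw [← neg_one_mul, hm, h1]; ring
    omega
  have h11 : κ 1 = 1 := by
    have := hm (-1) (-1); rw [h1] at this; simpa using this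
  rw [← Finset.add_sum_erase univ _ (mem_univ (0 : K)), h0, zero_mul, zero_add]
  rw [← Finset.add_sum_erase univ _ (mem_univ (1 : K)), h11] at hs
  have : ∑ t ∈ univ.erase (0 : K), κ t * κ (t + 1) = ∑ t ∈ univ.erase (1 : K), κ t := by
    refine Finset.sum_bij' (fun t _ => 1 + t⁻¹) (fun s _ => (s - 1)⁻¹) ?_ ?_ ?_ ?_ ?_
    · intro u hu; simpa using hu
    · intro u hu; simpa [sub_eq_zero] using hu
    · intro u _; simp
    · intro u _; simp
    · intro u hu
      have hu0 : u ≠ 0 := (Finset.mem_erase.1 hu).1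
      have : u + 1 = u * (1 + u⁻¹) := by field_simp
      rw [this, hm, ← mul_assoc, hκ u hu0, one_mul]
  omega

end Plane

section Arith

lemma choose_coprime (p k N : ℕ) (hp : p.Prime) (h3 : p ^ k % 8 = 3) (hN : 8 * N + 1 = (p ^ k) ^ 2) :
    ¬ p ∣ (7 * N).choose (3 * N) := by
  have hpo : p % 8 = 3 := by
    have h : ∀ k, (p ^ k) % 8 = 3 → p % 8 = 3 := by
      intro k hk
      have h1 : p % 8 < 8 := Nat.mod_lt _ (by norm_num)
      rcases Nat.even_or_odd' k with ⟨m, rfl | rfl⟩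
      · rw [pow_mul, Nat.pow_mod] at hk
        have : p ^ 2 % 8 = 0 ∨ p ^ 2 % 8 = 1 ∨ p ^ 2 % 8 = 4 := by
          rw [Nat.pow_mod]; interval_cases p % 8 <;> simp
        have hm : ∀ c, (c = 0 ∨ c = 1 ∨ c = 4) → (c ^ m % 8 ≠ 3) := by
          rintro c (rfl | rfl | rfl) <;> rcases m with _ | _ | m <;> simp [pow_succ] <;> omega
        exact absurd hk (hm _ this)
      · rw [pow_succ, pow_mul, Nat.mul_mod, Nat.pow_mod] at hk
        have : p ^ 2 % 8 = 0 ∨ p ^ 2 % 8 = 1 ∨ p ^ 2 % 8 = 4 := by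
          rw [Nat.pow_mod]; interval_cases p % 8 <;> simp
        have hm : ∀ c, (c = 0 ∨ c = 1 ∨ c = 4) → (c ^ m % 8 = 0 ∨ c ^ m % 8 = 1 ∨ c ^ m % 8 = 4) := by
          rintro c (rfl | rfl | rfl) <;> rcases m with _ | _ | m <;> simp [pow_succ] <;> omega
        rcases hm _ this with h | h | h <;> rw [h] at hk <;> omega
    exact h k h3
  have hpi : ∀ i, p ^ i % 8 = 1 ∨ p ^ i % 8 = 3 := by
    intro i
    induction i with
    | zero => simp
    | succ n ih => rw [pow_succ, Nat.mul_mod, hpo]; rcases ih with h | h <;> rw [h] <;> simp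
  have hpos : (7 * N).choose (3 * N) ≠ 0 := (Nat.choose_pos (by omega)).ne'
  have hf : ((7 * N).choose (3 * N)).factorization p = 0 := by
    rw [Nat.factorization_choose (b := 2 * k) hp (by omega)]
    · rw [Finset.card_eq_zero, Finset.filter_eq_empty_iff]
      intro i hi
      rw [Finset.mem_Ico] at hi
      have hd : p ^ i ∣ 8 * N + 1 := by
        rw [hN, ← pow_mul]; exact pow_dvd_pow _ (by omega)
      have e : 7 * N - 3 * N = 4 * N := by omega
      rw [e]
      obtain ⟨c, hc⟩ := hd
      have hP := hpi i
      generalize p ^ i = P at *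
      have hPpos : 0 < P := by omega
      push Not
      have key : ∀ m s r, m < 8 → 8 * r + m = s * P → r < P → (m * N) % P = r := by
        intro m s r hm hr hrP
        have h1 : (m * N) ≡ r [MOD P] := by
          have h8 : Nat.Coprime P 8 := by
            rw [Nat.coprime_comm]
            have : Nat.Coprime 2 P := by
              rw [Nat.coprime_two_left, Nat.odd_iff]; omega
            exact Nat.Coprime.pow_left 3 this
          have : 8 * (m * N) + m ≡ 8 * r + m [MOD P] := by
            rw [hr]
            have : 8 * (m * N) + m = (m * c) * P := by
              calc _ = m * (8 * N + 1) := by ring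
                _ = _ := by rw [hc]; ring
            rw [this]
            exact ((Nat.modEq_zero_iff_dvd.2 (Dvd.intro_left _ rfl)).trans
              (Nat.modEq_zero_iff_dvd.2 (Dvd.intro_left _ rfl)).symm)
          exact Nat.ModEq.cancel_left_of_coprime h8 (Nat.ModEq.add_right_cancel' _ this)
        rw [h1, Nat.mod_eq_of_lt hrP]
      rcases hP with hP | hP
      · rw [key 3 3 ((3 * P - 3) / 8) (by omega) (by omega) (by omega),
          key 4 4 ((4 * P - 4) / 8) (by omega) (by omega) (by omega)]
        omega
      · rw [key 3 1 ((P - 3) / 8) (by omega) (by omega) (by omega),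
          key 4 4 ((4 * P - 4) / 8) (by omega) (by omega) (by omega)]
        omega
    · refine Nat.log_lt_of_lt_pow ?_ ?_
      · rintro h
        have : N = 0 := by omega
        subst this
        have : p ^ k = 1 := by nlinarith [Nat.zero_le (p^k)]
        omega
      · rw [mul_comm 2 k, pow_mul]; omega
  intro hdvd
  have := hp.factorization_pos_of_dvd hpos hdvd
  omega

lemma rep_unique (p k : ℕ) (hp : p.Prime) (hp2 : p ≠ 2) (a b d : ℤ)
    (hd : ((p ^ k : ℕ) : ℤ) = d ^ 2 + 2)
    (hab : a ^ 2 + 2 * b ^ 2 = ((p ^ k : ℕ) : ℤ)) (hk : k ≠ 0)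
    (h : ¬ ((p : ℤ) ∣ a ∧ (p : ℤ) ∣ b)) : b ^ 2 = 1 := by
  have hpZ : Prime (p : ℤ) := Nat.prime_iff_prime_int.1 hp
  have hpl : (p : ℤ) ∣ ((p ^ k : ℕ) : ℤ) := by push_cast; exact dvd_pow_self _ hk
  have h2 : ¬ (p : ℤ) ∣ 2 := by
    intro h
    have : p ∣ 2 := by exact_mod_cast h
    exact hp2 ((Nat.prime_dvd_prime_iff_eq hp Nat.prime_two).1 this)
  set L : ℤ := ((p ^ k : ℕ) : ℤ) with hL
  have hLpow : L = (p : ℤ) ^ k := by rw [hL]; push_cast; rfl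
  have hLpos : 0 < L := by rw [hd]; positivity
  have ha : ¬ (p : ℤ) ∣ a := by
    intro h'
    refine h ⟨h', ?_⟩
    have : (p : ℤ) ∣ 2 * b ^ 2 := by
      have e : 2 * b ^ 2 = L - a ^ 2 := by rw [← hab]; ring
      rw [e]; exact dvd_sub hpl (dvd_pow h' (by norm_num))
    rcases hpZ.dvd_or_dvd this with h | h
    · exact absurd h h2
    · exact hpZ.dvd_of_dvd_pow h
  have hprod : (p : ℤ) ^ k ∣ (a - d * b) * (a + d * b) := by
    rw [← hLpow]
    refine ⟨1 - b ^ 2, ?_⟩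
    have : d ^ 2 = L - 2 := by rw [hd]; ring
    have e : a ^ 2 = L - 2 * b ^ 2 := by rw [← hab]; ring
    linear_combination e - b ^ 2 * this
  -- reduce to the case `L ∣ a - d * b`
  have main : ∀ d : ℤ, L = d ^ 2 + 2 → L ∣ a - d * b → b ^ 2 = 1 := by
    rintro d hd ⟨c, hc⟩
    have e : L ^ 2 = (a * d + 2 * b) ^ 2 + 2 * (a - d * b) ^ 2 := by
      rw [show L ^ 2 = L * L by ring]
      nth_rewrite 1 [← hab]
      rw [hd]; ring
    have hc0 : c = 0 := by
      by_contra hne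
      have : 1 ≤ c ^ 2 := by
        have := sq_pos_of_ne_zero hne
        omega
      rw [hc] at e
      nlinarith [sq_nonneg (a * d + 2 * b), sq_pos_of_pos hLpos]
    have e2 : a = d * b := by rw [hc0] at hc; linarith
    have : b ^ 2 * L = L := by
      rw [e2] at hab
      nth_rewrite 1 [hd]
      linear_combination hab
    exact mul_right_cancel₀ hLpos.ne' (by rw [this, one_mul])
  by_cases hc : (p : ℤ) ∣ a - d * b
  · have hnd : ¬ (p : ℤ) ∣ a + d * b := by
      intro h'
      have : (p : ℤ) ∣ 2 * a := by
        have := dvd_add hc h'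
        ring_nf at this
        rwa [mul_comm]
      rcases hpZ.dvd_or_dvd this with h | h
      · exact h2 h
      · exact ha h
    refine main d hd ?_
    rw [hLpow]
    exact (IsCoprime.pow_left ((Prime.coprime_iff_not_dvd hpZ).2 hnd)).dvd_of_dvd_mul_right hprod
  · refine main (-d) (by rw [hd]; ring) ?_
    rw [hLpow]
    have := (IsCoprime.pow_left (m := k) ((Prime.coprime_iff_not_dvd hpZ).2 hc)).dvd_of_dvd_mul_left hprod
    rwa [show a - -d * b = a + d * b by ring]

end Arith

section ClData

variable {F : Type*} [Field F] [Fintype F] [DecidableEq F]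

/-- `cl` is the discrete logarithm modulo `8` with respect to `α`. -/
structure ClData (α : F) (cl : F → ZMod 8) : Prop where
  ne : α ≠ 0
  ex : ∀ x : F, x ≠ 0 → ∃ n : ℕ, α ^ n = x
  pow : ∀ n : ℕ, cl (α ^ n) = n
  ord : ∀ n : ℕ, α ^ n = 1 → (Fintype.card F - 1) ∣ n

lemma exists_cl (α : F) (hα : IsPrimitiveElt α) (h2 : 2 < Fintype.card F)
    (h8 : 8 ∣ Fintype.card F - 1) : ∃ cl, ClData α cl := by
  have hne : α ≠ 0 := by
    rintro rfl
    have : (univ : Finset F) ⊆ {0, 1} := by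
      intro x _
      by_cases hx : x = 0
      · simp [hx]
      · obtain ⟨n, rfl⟩ := hα x hx
        rcases n with _ | n <;> simp
    have := Finset.card_le_card this
    rw [Finset.card_univ] at this
    have h3 := Finset.card_le_two (a := (0 : F)) (b := 1)
    omega
  have hord : orderOf α = Fintype.card F - 1 := by
    have h1 : ∀ x : Fˣ, x ∈ Subgroup.zpowers (Units.mk0 α hne) := by
      intro x
      obtain ⟨n, hn⟩ := hα x x.ne_zero
      exact ⟨n, Units.ext (by simpa using hn)⟩
    have := orderOf_eq_card_of_forall_mem_zpowers h1
    rw [Nat.card_eq_fintype_card, Fintype.card_units, ← orderOf_units, Units.val_mk0] at this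
    exact this
  have hinj : ∀ n m : ℕ, α ^ n = α ^ m → (n : ZMod 8) = m := by
    intro n m h
    have h' : (Units.mk0 α hne) ^ n = (Units.mk0 α hne) ^ m := Units.ext (by simpa using h)
    rw [pow_eq_pow_iff_modEq, ← orderOf_units, Units.val_mk0, hord] at h'
    exact (ZMod.natCast_eq_natCast_iff _ _ _).2 (h'.of_dvd h8)
  classical
  refine ⟨fun x => if h : x ≠ 0 then ((hα x h).choose : ZMod 8) else 0, hne, hα, ?_, ?_⟩
  · intro n
    have h : α ^ n ≠ 0 := pow_ne_zero _ hne
    simp only [dif_pos h]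
    exact hinj _ _ (hα _ h).choose_spec
  · intro n hn
    rw [← hord]; exact orderOf_dvd_of_pow_eq_one hn

variable {α : F} {cl : F → ZMod 8}

lemma ClData.mul (H : ClData α cl) {x y : F} (hx : x ≠ 0) (hy : y ≠ 0) :
    cl (x * y) = cl x + cl y := by
  obtain ⟨n, rfl⟩ := H.ex x hx
  obtain ⟨m, rfl⟩ := H.ex y hy
  rw [← pow_add, H.pow, H.pow, H.pow]; push_cast; rfl

lemma ClData.powx (H : ClData α cl) {x : F} (hx : x ≠ 0) (m : ℕ) :
    cl (x ^ m) = m * cl x := by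
  obtain ⟨n, rfl⟩ := H.ex x hx
  rw [← pow_mul, H.pow, H.pow]; push_cast; ring

lemma ClData.neg_one (H : ClData α cl) (N : ℕ) (hN : 8 * N + 1 = Fintype.card F) (hodd : N % 2 = 1)
    (hne : (-1 : F) ≠ 1) : cl (-1) = 4 := by
  obtain ⟨n, hn⟩ := H.ex (-1) (by simp)
  have h2 : α ^ (2 * n) = 1 := by rw [mul_comm, pow_mul, hn]; norm_num
  have hc : Fintype.card F - 1 = 8 * N := by omega
  obtain ⟨m, hm⟩ := H.ord _ h2
  rw [hc] at hm
  have hn4 : n = 4 * (N * m) := by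
    have : 8 * N * m = 8 * (N * m) := by ring
    omega
  have hm2 : m % 2 = 1 := by
    by_contra h
    obtain ⟨k, rfl⟩ : ∃ k, m = 2 * k := ⟨m / 2, by omega⟩
    apply hne
    rw [← hn, hn4, show 4 * (N * (2 * k)) = (8 * N) * k by ring, ← hc, pow_mul,
      FiniteField.pow_card_sub_one_eq_one _ H.ne, one_pow]
  have h4 : (N * m) % 2 = 1 := by rw [Nat.mul_mod, hodd, hm2]
  rw [← hn, H.pow]
  have : n % 8 = 4 % 8 := by omega
  exact (ZMod.natCast_eq_natCast_iff' n 4 8).2 this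

/-- pull back a function on `ZMod 8` to `F`, with value `0` at `0`. -/
def fn (cl : F → ZMod 8) (T : ZMod 8 → ℤ) (x : F) : ℤ := if x = 0 then 0 else T (cl x)

lemma fn_zero (T : ZMod 8 → ℤ) : fn cl T 0 = 0 := by simp [fn]

lemma fn_ne (T : ZMod 8 → ℤ) {x : F} (hx : x ≠ 0) : fn cl T x = T (cl x) := by simp [fn, hx]

lemma ClData.sum_fn (H : ClData α cl) (T : ZMod 8 → ℤ) :
    8 * ∑ x, fn cl T x = ((Fintype.card F : ℤ) - 1) * ∑ c, T c := by
  have hshift : ∀ s : ZMod 8, ∑ x, fn cl (fun c => T (s + c)) x = ∑ x, fn cl T x := by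
    intro s
    have hs : α ^ s.val ≠ 0 := pow_ne_zero _ H.ne
    refine Fintype.sum_equiv (Equiv.mulLeft₀ _ hs) _ _ fun x => ?_
    by_cases hx : x = 0
    · simp [hx, fn]
    · rw [fn_ne _ hx]
      change _ = fn cl T (α ^ s.val * x)
      rw [fn_ne _ (mul_ne_zero hs hx), H.mul hs hx, H.pow]
      simp
  have h1 : ∑ s : ZMod 8, ∑ x, fn cl (fun c => T (s + c)) x = 8 * ∑ x, fn cl T x := by
    rw [Finset.sum_congr rfl (fun s _ => hshift s), Finset.sum_const]
    simp [ZMod.card]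
  rw [← h1, Finset.sum_comm]
  rw [← Finset.add_sum_erase univ _ (mem_univ (0 : F))]
  have h2 : ∀ x ∈ univ.erase (0 : F), ∑ s : ZMod 8, fn cl (fun c => T (s + c)) x = ∑ c, T c := by
    intro x hx
    have hx0 := (Finset.mem_erase.1 hx).1
    simp only [fn_ne _ hx0]
    exact Fintype.sum_equiv (Equiv.addRight (cl x)) _ _ fun _ => rfl
  rw [Finset.sum_congr rfl h2]
  simp only [fn_zero, Finset.sum_const_zero, zero_add, Finset.sum_const, nsmul_eq_mul]
  rw [Finset.card_erase_of_mem (mem_univ _), Finset.card_univ, Nat.cast_sub Fintype.card_pos,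
    Nat.cast_one]

end ClData

section Corr

variable {K F : Type*} [Field K] [Fintype K] [DecidableEq K] [Field F] [Fintype F] [DecidableEq F]
  [Algebra K F] {α : F} {cl : F → ZMod 8}

lemma ClData.smul_aux (H : ClData α cl) (l : ℕ) (hK : Fintype.card K = l)
    (hF : Fintype.card F = l ^ 2) (hl : l % 8 = 3) {u : K} (hu : u ≠ 0) :
    ∃ m, α ^ (4 * m) = algebraMap K F u := by
  obtain ⟨n, hn⟩ := H.ex (algebraMap K F u) (by simpa using hu)
  have h1 : α ^ (n * (l - 1)) = 1 := by
    rw [pow_mul, hn, ← map_pow, ← hK, FiniteField.pow_card_sub_one_eq_one _ hu, map_one]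
  have h2 := H.ord _ h1
  rw [hF] at h2
  have h3 : l ^ 2 - 1 = (l + 1) * (l - 1) := by
    obtain ⟨k, rfl⟩ : ∃ k, l = k + 1 := ⟨l - 1, by omega⟩
    simp only [Nat.add_sub_cancel]
    rw [Nat.sub_eq_iff_eq_add (by nlinarith)]; ring
  rw [h3] at h2
  have h4 := Nat.dvd_of_mul_dvd_mul_right (by omega) h2
  obtain ⟨m, rfl⟩ : 4 ∣ n := Nat.dvd_trans (by omega) h4
  exact ⟨m, hn⟩

lemma ClData.smul (H : ClData α cl) (l : ℕ) (hK : Fintype.card K = l)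
    (hF : Fintype.card F = l ^ 2) (hl : l % 8 = 3) {u : K} (hu : u ≠ 0) :
    cl (algebraMap K F u) = 0 ∨ cl (algebraMap K F u) = 4 := by
  obtain ⟨m, hm⟩ := H.smul_aux l hK hF hl hu
  rw [← hm, H.pow]
  push_cast
  generalize (m : ZMod 8) = c
  revert c; decide

/-- quadratic character of `K`. -/
def kap (cl : F → ZMod 8) (u : K) : ℤ :=
  if u = 0 then 0 else if cl (algebraMap K F u) = 0 then 1 else -1

/-- trivial character of `K`. -/
def triv (u : K) : ℤ := if u = 0 then 0 else 1

lemma kap_sq {u : K} (hu : u ≠ 0) : kap cl u * kap cl u = 1 := by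
  unfold kap; rw [if_neg hu]; split_ifs <;> simp

lemma sum_triv : ∑ t : K, triv t * triv (t + 1) = (Fintype.card K : ℤ) - 2 := by
  have h : ∀ t : K, triv t * triv (t + 1) = 1 - (if t = 0 then 1 else 0) - (if t = -1 then 1 else 0) := by
    intro t
    unfold triv
    by_cases h0 : t = 0
    · have : ¬ ((0 : K) = -1) := by simp
      simp [h0, this]
    · by_cases h1 : t = -1
      · simp [h1]
      · have : t + 1 ≠ 0 := fun h => h1 (eq_neg_of_add_eq_zero_left h)
        simp [h0, h1, this]
  simp only [h, Finset.sum_sub_distrib, Finset.sum_ite_eq', mem_univ, if_true]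
  simp; ring

lemma ClData.fn_kap (H : ClData α cl) (l : ℕ) (hK : Fintype.card K = l)
    (hF : Fintype.card F = l ^ 2) (hl : l % 8 = 3) (T : ZMod 8 → ℤ) (hT : ∀ c, T (4 + c) = - T c)
    (u : K) (x : F) : fn cl T (u • x) = kap cl u * fn cl T x := by
  by_cases hu : u = 0
  · simp [hu, fn, kap]
  by_cases hx : x = 0
  · simp [hx, fn]
  have hu' : algebraMap K F u ≠ 0 := by simpa using hu
  rw [Algebra.smul_def, fn_ne _ (mul_ne_zero hu' hx), fn_ne _ hx, H.mul hu' hx, kap, if_neg hu]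
  rcases H.smul l hK hF hl hu with h | h <;> rw [h]
  · simp
  · have : (4 : ZMod 8) ≠ 0 := by decide
    simp [hT, this]

lemma ClData.fn_triv (H : ClData α cl) (l : ℕ) (hK : Fintype.card K = l)
    (hF : Fintype.card F = l ^ 2) (hl : l % 8 = 3) (T : ZMod 8 → ℤ) (hT : ∀ c, T (4 + c) = T c)
    (u : K) (x : F) : fn cl T (u • x) = triv u * fn cl T x := by
  by_cases hu : u = 0
  · simp [hu, fn, triv]
  by_cases hx : x = 0
  · simp [hx, fn]
  have hu' : algebraMap K F u ≠ 0 := by simpa using hu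
  rw [Algebra.smul_def, fn_ne _ (mul_ne_zero hu' hx), fn_ne _ hx, H.mul hu' hx, triv, if_neg hu]
  rcases H.smul l hK hF hl hu with h | h <;> rw [h]
  · simp
  · simp [hT]

lemma ClData.sum_kap (H : ClData α cl) (l : ℕ) (hK : Fintype.card K = l)
    (hF : Fintype.card F = l ^ 2) (hl : l % 8 = 3) (hneg : cl (-1) = 4) :
    ∑ t : K, kap cl t * kap cl (t + 1) = -1 := by
  refine sum_kappa _ (by simp [kap]) (fun u hu => kap_sq hu) ?_ ?_
  · intro u v
    by_cases hu : u = 0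
    · simp [hu, kap]
    by_cases hv : v = 0
    · simp [hv, kap]
    have hu' : algebraMap K F u ≠ 0 := by simpa using hu
    have hv' : algebraMap K F v ≠ 0 := by simpa using hv
    unfold kap
    rw [if_neg hu, if_neg hv, if_neg (mul_ne_zero hu hv), map_mul, H.mul hu' hv']
    have h4 : (4 : ZMod 8) ≠ 0 := by decide
    have h8 : (4 + 4 : ZMod 8) = 0 := by decide
    rcases H.smul l hK hF hl hu with h | h <;> rcases H.smul l hK hF hl hv with h' | h' <;>
      simp [h, h', h4, h8]
  · have h4 : (4 : ZMod 8) ≠ 0 := by decide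
    simp [kap, hneg, h4]

/-- the element `β`, with `β^l = -β`. -/
lemma ClData.exists_beta (H : ClData α cl) (l : ℕ)
    (hF : Fintype.card F = l ^ 2) (hl : l % 8 = 3) (hneg : (-1 : F) ≠ 1) :
    ∃ β : F, β ≠ 0 ∧ β ^ l = - β ∧ (cl β = 2 ∨ cl β = 6) := by
  refine ⟨α ^ ((l + 1) / 2), pow_ne_zero _ H.ne, ?_, ?_⟩
  · have hsq : (α ^ ((l + 1) / 2 * (l - 1))) ^ 2 = 1 := by
      rw [← pow_mul, ← FiniteField.pow_card_sub_one_eq_one α H.ne, hF]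
      congr 1
      obtain ⟨k, rfl⟩ : ∃ k, l = 2 * k + 1 := ⟨l / 2, by omega⟩
      have h1 : (2 * k + 1 + 1) / 2 = k + 1 := by omega
      rw [h1, eq_comm, Nat.sub_eq_iff_eq_add (by nlinarith)]
      simp only [Nat.add_sub_cancel]
      ring
    have hne : α ^ ((l + 1) / 2 * (l - 1)) ≠ 1 := by
      intro h
      have h2 := H.ord _ h
      rw [hF] at h2
      obtain ⟨k, rfl⟩ : ∃ k, l = 2 * k + 1 := ⟨l / 2, by omega⟩
      have h1 : (2 * k + 1 + 1) / 2 = k + 1 := by omega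
      rw [h1] at h2
      have hk : 0 < k := by omega
      have := Nat.le_of_dvd (by simp; omega) h2
      have h3 : (2 * k + 1) ^ 2 - 1 = 2 * ((k + 1) * (2 * k + 1 - 1)) := by
        rw [Nat.sub_eq_iff_eq_add (by nlinarith)]
        simp only [Nat.add_sub_cancel]
        ring
      have h4 : 0 < (k + 1) * (2 * k + 1 - 1) := Nat.mul_pos (by omega) (by omega)
      omega
    have hm := (mul_self_eq_one_iff.1 (by rw [← sq]; exact hsq)).resolve_left hne
    rw [← pow_mul]
    have : (l + 1) / 2 * l = (l + 1) / 2 * (l - 1) + (l + 1) / 2 := by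
      obtain ⟨k, rfl⟩ : ∃ k, l = k + 1 := ⟨l - 1, by omega⟩
      simp only [Nat.add_sub_cancel]
      ring
    rw [this, pow_add, hm]; ring
  · rw [H.pow]
    have : ((l + 1) / 2) % 8 = 2 ∨ ((l + 1) / 2) % 8 = 6 := by omega
    rcases this with h | h
    · left; exact (ZMod.natCast_eq_natCast_iff' _ 2 8).2 h
    · right; exact (ZMod.natCast_eq_natCast_iff' _ 6 8).2 h

lemma ClData.indep (H : ClData α cl) (l : ℕ) (hK : Fintype.card K = l)
    (hF : Fintype.card F = l ^ 2) (hl : l % 8 = 3) {β : F} (hβ0 : β ≠ 0) (hβ : cl β = 2 ∨ cl β = 6)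
    (y : F) (hy : y ≠ 0) (u v : K) (h : u • y + v • (y * β) = 0) : u = 0 ∧ v = 0 := by
  have h1 : y * (algebraMap K F u + algebraMap K F v * β) = 0 := by
    rw [Algebra.smul_def, Algebra.smul_def] at h
    linear_combination h
  have h2 := (mul_eq_zero.1 h1).resolve_left hy
  have hv : v = 0 := by
    by_contra hv
    have hv' : algebraMap K F v ≠ 0 := by simpa using hv
    have e : β = algebraMap K F (-u / v) := by
      rw [map_div₀, map_neg]; field_simp; linear_combination h2
    by_cases h0 : -u / v = 0
    · exact hβ0 (by rw [e, h0, map_zero])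
    · rw [e] at hβ
      rcases H.smul l hK hF hl h0 with h | h <;> rw [h] at hβ <;> rcases hβ with h' | h' <;>
        revert h' <;> decide
  refine ⟨?_, hv⟩
  simpa [hv] using h2

end Corr

section Values

variable {K F : Type*} [Field K] [Fintype K] [DecidableEq K] [Field F] [Fintype F] [DecidableEq F]
  [Algebra K F] {α : F} {cl : F → ZMod 8}

/-- Sum over a line and its direction of an even function. -/
lemma ClData.line_sum (H : ClData α cl) (l : ℕ) (hK : Fintype.card K = l)
    (hF : Fintype.card F = l ^ 2) (hl : l % 8 = 3) {β : F} (hβ0 : β ≠ 0) (hβ : cl β = 2 ∨ cl β = 6)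
    (y : F) (hy : y ≠ 0) (T : ZMod 8 → ℤ) (hT : ∀ c, T (4 + c) = T c) :
    8 * (∑ v : K, fn cl T (y + v • (y * β)) + T (cl (y * β))) = (l + 1) * ∑ c, T c := by
  have h1 := sum_inv (K := K) (by rw [hF, hK]) y (y * β) (H.indep l hK hF hl hβ0 hβ y hy) (fn cl T)
    (fn_zero T) (fun u hu x => by rw [H.fn_triv l hK hF hl T hT, triv, if_neg hu, one_mul])
  have h2 := H.sum_fn T
  rw [fn_ne _ (mul_ne_zero hy hβ0)] at h1
  rw [h1, hF, hK] at h2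
  push_cast at h2
  have hl1 : (l : ℤ) - 1 ≠ 0 := by omega
  apply mul_left_cancel₀ hl1
  linear_combination h2

lemma ClData.corr_even (H : ClData α cl) (l : ℕ) (hK : Fintype.card K = l)
    (hF : Fintype.card F = l ^ 2) (hl : l % 8 = 3) {β : F} (hβ0 : β ≠ 0) (hβ : cl β = 2 ∨ cl β = 6)
    (T : ZMod 8 → ℤ) (hT : ∀ c, T (4 + c) = T c) (hT0 : ∑ c, T c = 0) (z : F) (hz : z ≠ 0) :
    8 * ∑ x, fn cl T x * fn cl T (x + z) = 8 * l * T (cl z) ^ 2 - (l + 1) * ∑ c, T c ^ 2 := by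
  obtain ⟨y, rfl⟩ : ∃ y, z = y * β := ⟨z / β, by field_simp⟩
  have hy : y ≠ 0 := left_ne_zero_of_mul hz
  have h1 := H.line_sum l hK hF hl hβ0 hβ y hy T hT
  have h2 := H.line_sum l hK hF hl hβ0 hβ y hy (fun c => T c ^ 2) (fun c => by simp only [hT])
  have h3 := corr (K := K) (by rw [hF, hK]) y (y * β) (H.indep l hK hF hl hβ0 hβ y hy)
    (fn cl T) (fn cl T) triv (fun u hu => by simp [triv, hu])
    (fun u x => by rw [H.fn_triv l hK hF hl T hT]; simp)
    (fun u x => by rw [H.fn_triv l hK hF hl T hT]; simp)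
  have e : ∀ x, fn cl (fun c => T c ^ 2) x = fn cl T x * fn cl T x := by
    intro x; unfold fn; split_ifs <;> ring
  simp only [e] at h2
  rw [h3, sum_triv, fn_ne _ hz, hK]
  rw [hT0] at h1
  have h1' : ∑ v : K, fn cl T (y + v • (y * β)) = - T (cl (y * β)) := by linarith
  rw [h1']
  push_cast
  linear_combination -h2

/-- number of points of the base line in each class. -/
def nn (K : Type*) [Field K] [Fintype K] [Algebra K F] (cl : F → ZMod 8) (β : F) (j : ZMod 8) : ℤ :=
  ((univ.filter (fun v : K => cl (1 + v • β) = j)).card : ℤ)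

lemma ClData.line_ne (H : ClData α cl) (l : ℕ) (hK : Fintype.card K = l)
    (hF : Fintype.card F = l ^ 2) (hl : l % 8 = 3) {β : F} (hβ0 : β ≠ 0) (hβ : cl β = 2 ∨ cl β = 6)
    (v : K) : 1 + v • β ≠ 0 := by
  intro h
  have := H.indep l hK hF hl hβ0 hβ 1 one_ne_zero 1 v (by simpa using h)
  exact one_ne_zero this.1

lemma ClData.nn_symm (H : ClData α cl) (l : ℕ) (hK : Fintype.card K = l)
    (hF : Fintype.card F = l ^ 2) (hl : l % 8 = 3) {β : F} (hβ0 : β ≠ 0) (hβ : cl β = 2 ∨ cl β = 6)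
    (hβl : β ^ l = -β) (hadd : ∀ x y : F, (x + y) ^ l = x ^ l + y ^ l) (j : ZMod 8) :
    nn K cl β j = nn K cl β (3 * j) := by
  have h3 : (l : ZMod 8) = 3 := (ZMod.natCast_eq_natCast_iff' l 3 8).2 hl
  have key : ∀ v : K, cl (1 + (-v) • β) = 3 * cl (1 + v • β) := by
    intro v
    rw [← h3, ← H.powx (H.line_ne l hK hF hl hβ0 hβ v), hadd, one_pow, Algebra.smul_def,
      Algebra.smul_def, mul_pow, hβl, ← map_pow, ← hK, FiniteField.pow_card]
    simp
  have h9 : ∀ c d : ZMod 8, 3 * c = 3 * d → c = d := by decide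
  unfold nn
  congr 1
  refine Finset.card_bij' (fun v _ => -v) (fun v _ => -v) ?_ ?_ ?_ ?_
  · intro v hv
    simp only [Finset.mem_filter, mem_univ, true_and] at hv ⊢
    rw [key, hv]
  · intro v hv
    simp only [Finset.mem_filter, mem_univ, true_and] at hv ⊢
    apply h9
    rw [← hv, ← key, neg_neg]
  · simp
  · simp

lemma sum_nn {R : Type*} [CommRing R] (β : F) (T : ZMod 8 → R) :
    ∑ v : K, T (cl (1 + v • β)) = ∑ j, (nn K cl β j : R) * T j := by
  rw [← Finset.sum_fiberwise univ (fun v : K => cl (1 + v • β))]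
  refine Finset.sum_congr rfl fun j _ => ?_
  rw [Finset.sum_congr rfl (g := fun _ => T j)]
  · rw [Finset.sum_const, nsmul_eq_mul, nn]; push_cast; rfl
  · intro v hv
    rw [(Finset.mem_filter.1 hv).2]

/-- odd part of the sign function -/
def To : ZMod 8 → ℤ := ![1, 0, 1, 0, -1, 0, -1, 0]
/-- even part of the sign function -/
def Te : ZMod 8 → ℤ := ![0, 1, 0, -1, 0, 1, 0, -1]
/-- table of squared line sums -/
def Th (a b : ℤ) : ZMod 8 → ℤ :=
  ![a ^ 2, 4 * b ^ 2, a ^ 2, 0, a ^ 2, 4 * b ^ 2, a ^ 2, 0]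

lemma sum8 {R : Type*} [AddCommMonoid R] (T : ZMod 8 → R) :
    ∑ c, T c = T 0 + T 1 + T 2 + T 3 + T 4 + T 5 + T 6 + T 7 := Fin.sum_univ_eight T

lemma table (n : ZMod 8 → ℤ) (hn : ∀ j, n j = n (3 * j)) (c e : ZMod 8) (he : e = 2 ∨ e = 6) :
    (∑ j, n j * To (c + j)) ^ 2 = Th (n 0 - n 4) (n 1 - n 5) (c + e) := by
  have h13 : n 3 = n 1 := (hn 1).symm
  have h26 : n 6 = n 2 := (hn 2).symm
  have h57 : n 7 = n 5 := (hn 5).symm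
  have hc : c = 0 ∨ c = 1 ∨ c = 2 ∨ c = 3 ∨ c = 4 ∨ c = 5 ∨ c = 6 ∨ c = 7 := by
    revert c; decide
  have hTh : Th (n 0 - n 4) (n 1 - n 5) (c + e) = Th (n 0 - n 4) (n 1 - n 5) (c + 2) := by
    rcases he with rfl | rfl
    · rfl
    · rcases hc with rfl | rfl | rfl | rfl | rfl | rfl | rfl | rfl <;> rfl
  rw [hTh, sum8, h13, h26, h57]
  rcases hc with rfl | rfl | rfl | rfl | rfl | rfl | rfl | rfl
  · change (n 0 * 1 + n 1 * 0 + n 2 * 1 + n 1 * 0 + n 4 * (-1) + n 5 * 0 + n 2 * (-1) + n 5 * 0) ^ 2 = (n 0 - n 4) ^ 2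
    ring
  · change (n 0 * 0 + n 1 * 1 + n 2 * 0 + n 1 * (-1) + n 4 * 0 + n 5 * (-1) + n 2 * 0 + n 5 * 1) ^ 2 = 0
    ring
  · change (n 0 * 1 + n 1 * 0 + n 2 * (-1) + n 1 * 0 + n 4 * (-1) + n 5 * 0 + n 2 * 1 + n 5 * 0) ^ 2 = (n 0 - n 4) ^ 2
    ring
  · change (n 0 * 0 + n 1 * (-1) + n 2 * 0 + n 1 * (-1) + n 4 * 0 + n 5 * 1 + n 2 * 0 + n 5 * 1) ^ 2 = 4 * (n 1 - n 5) ^ 2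
    ring
  · change (n 0 * (-1) + n 1 * 0 + n 2 * (-1) + n 1 * 0 + n 4 * 1 + n 5 * 0 + n 2 * 1 + n 5 * 0) ^ 2 = (n 0 - n 4) ^ 2
    ring
  · change (n 0 * 0 + n 1 * (-1) + n 2 * 0 + n 1 * 1 + n 4 * 0 + n 5 * 1 + n 2 * 0 + n 5 * (-1)) ^ 2 = 0
    ring
  · change (n 0 * (-1) + n 1 * 0 + n 2 * 1 + n 1 * 0 + n 4 * 1 + n 5 * 0 + n 2 * (-1) + n 5 * 0) ^ 2 = (n 0 - n 4) ^ 2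
    ring
  · change (n 0 * 0 + n 1 * 1 + n 2 * 0 + n 1 * 1 + n 4 * 0 + n 5 * (-1) + n 2 * 0 + n 5 * (-1)) ^ 2 = 4 * (n 1 - n 5) ^ 2
    ring

end Values

section Odd

variable {K F : Type*} [Field K] [Fintype K] [DecidableEq K] [Field F] [Fintype F] [DecidableEq F]
  [Algebra K F] {α : F} {cl : F → ZMod 8}

lemma To_odd : ∀ c, To (4 + c) = - To c := by decide

lemma ClData.corr_odd (H : ClData α cl) (l : ℕ) (hK : Fintype.card K = l)
    (hF : Fintype.card F = l ^ 2) (hl : l % 8 = 3) {β : F} (hβ0 : β ≠ 0) (hβ : cl β = 2 ∨ cl β = 6)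
    (hβl : β ^ l = -β) (hadd : ∀ x y : F, (x + y) ^ l = x ^ l + y ^ l) (hneg : cl (-1) = 4)
    (z : F) (hz : z ≠ 0) :
    2 * ∑ x, fn cl To x * fn cl To (x + z) =
      2 * Th (nn K cl β 0 - nn K cl β 4) (nn K cl β 1 - nn K cl β 5) (cl z) - (l + 1) := by
  obtain ⟨y, rfl⟩ : ∃ y, z = y * β := ⟨z / β, by field_simp⟩
  have hy : y ≠ 0 := left_ne_zero_of_mul hz
  have h2 := H.line_sum l hK hF hl hβ0 hβ y hy (fun c => To c ^ 2)
    (fun c => by simp only [To_odd]; ring)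
  have h3 := corr (K := K) (by rw [hF, hK]) y (y * β) (H.indep l hK hF hl hβ0 hβ y hy)
    (fn cl To) (fn cl To) (kap cl) (fun u hu => kap_sq hu)
    (fun u x => by rw [H.fn_kap l hK hF hl To To_odd]; simp)
    (fun u x => by rw [H.fn_kap l hK hF hl To To_odd]; simp)
  have e : ∀ x, fn cl (fun c => To c ^ 2) x = fn cl To x * fn cl To x := by
    intro x; unfold fn; split_ifs <;> ring
  simp only [e] at h2
  have hs : ∑ c, To c ^ 2 = 4 := by decide
  rw [hs] at h2
  have h4 : ∑ v : K, fn cl To (y + v • (y * β)) = ∑ j, nn K cl β j * To (cl y + j) := by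
    have := sum_nn (K := K) (cl := cl) β (fun j => To (cl y + j))
    simp only [Int.cast_id] at this
    rw [← this]
    refine Finset.sum_congr rfl fun v _ => ?_
    have hv := H.line_ne l hK hF hl hβ0 hβ v
    have : y + v • (y * β) = y * (1 + v • β) := by
      rw [Algebra.smul_def, Algebra.smul_def]; ring
    rw [this, fn_ne _ (mul_ne_zero hy hv), H.mul hy hv]
  have h5 := table (nn K cl β) (H.nn_symm l hK hF hl hβ0 hβ hβl hadd) (cl y) (cl β) hβ
  rw [← h4, ← H.mul hy hβ0] at h5
  rw [h3, ← h5, H.sum_kap l hK hF hl hneg, fn_ne _ hz]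
  push_cast
  linarith

lemma ClData.norm_eq (H : ClData α cl) (l : ℕ) (hK : Fintype.card K = l)
    (hF : Fintype.card F = l ^ 2) (hl : l % 8 = 3) {β : F} (hβ0 : β ≠ 0) (hβ : cl β = 2 ∨ cl β = 6)
    (hβl : β ^ l = -β) (hadd : ∀ x y : F, (x + y) ^ l = x ^ l + y ^ l) (hneg : cl (-1) = 4) :
    (nn K cl β 0 - nn K cl β 4) ^ 2 + 2 * (nn K cl β 1 - nn K cl β 5) ^ 2 = l := by
  set a := nn K cl β 0 - nn K cl β 4
  set b := nn K cl β 1 - nn K cl β 5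
  have hsum : ∑ x, fn cl To x = 0 := by
    have := H.sum_fn To
    have h0 : ∑ c, To c = 0 := by decide
    rw [h0] at this; omega
  have h1 : ∑ z, ∑ x, fn cl To x * fn cl To (x + z) = 0 := by
    rw [Finset.sum_comm]
    have : ∀ x : F, ∑ z, fn cl To x * fn cl To (x + z) = 0 := by
      intro x
      rw [← Finset.mul_sum]
      have : ∑ z, fn cl To (x + z) = ∑ z, fn cl To z :=
        Fintype.sum_equiv (Equiv.addLeft x) _ _ fun _ => rfl
      rw [this, hsum, mul_zero]
    simp [this]
  rw [← Finset.add_sum_erase univ _ (mem_univ (0 : F))] at h1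
  have h2 : 2 * ∑ z ∈ univ.erase (0 : F), ∑ x, fn cl To x * fn cl To (x + z) =
      ∑ z, fn cl (fun c => 2 * Th a b c - (l + 1)) z := by
    rw [Finset.mul_sum, ← Finset.add_sum_erase univ (fn cl _) (mem_univ (0 : F)), fn_zero, zero_add]
    refine Finset.sum_congr rfl fun z hz => ?_
    have hz0 := (Finset.mem_erase.1 hz).1
    rw [H.corr_odd l hK hF hl hβ0 hβ hβl hadd hneg z hz0, fn_ne _ hz0]
  have h3 := H.sum_fn (fun c => 2 * Th a b c - (l + 1))
  have h4 := H.sum_fn (fun c => To c * To c)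
  have e : ∀ x, fn cl (fun c => To c * To c) x = fn cl To x * fn cl To x := by
    intro x; unfold fn; split_ifs <;> ring
  have hs : ∑ c, To c * To c = 4 := by decide
  simp only [e] at h4
  simp only [add_zero] at h1
  rw [hs] at h4
  have h5 : ∑ c, (2 * Th a b c - ((l : ℤ) + 1)) = 8 * a ^ 2 + 16 * b ^ 2 - 8 * (l + 1) := by
    rw [sum8]
    change (2 * a ^ 2 - _) + (2 * (4 * b ^ 2) - _) + (2 * a ^ 2 - _) + (2 * 0 - _) +
      (2 * a ^ 2 - _) + (2 * (4 * b ^ 2) - _) + (2 * a ^ 2 - _) + (2 * 0 - _) = _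
    ring
  rw [h5, ← h2] at h3
  have hq : (Fintype.card F : ℤ) - 1 ≠ 0 := by
    rw [hF]; push_cast
    have : (3 : ℤ) ≤ l := by omega
    nlinarith
  apply mul_left_cancel₀ hq
  linarith

lemma sum_pow_card (i : ℕ) (hi : i ≠ 0) :
    ∑ x : F, x ^ i = if Fintype.card F - 1 ∣ i then -1 else 0 := by
  rw [← FiniteField.sum_pow_units, ← Finset.add_sum_erase univ _ (mem_univ (0 : F)), zero_pow hi,
    zero_add]
  symm
  refine Finset.sum_bij (fun (u : Fˣ) _ => (u : F)) ?_ ?_ ?_ ?_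
  · intro u _; simp
  · intro u _ v _ h; exact Units.ext h
  · intro x hx; exact ⟨Units.mk0 x (Finset.mem_erase.1 hx).1, mem_univ _, rfl⟩
  · intro u _; rfl

lemma ClData.not_dvd (H : ClData α cl) (p k l N : ℕ) (hp : p.Prime) [CharP F p] (hlp : l = p ^ k)
    (hK : Fintype.card K = l)
    (hF : Fintype.card F = l ^ 2) (hl : l % 8 = 3) (hN : 8 * N + 1 = l ^ 2)
    {β : F} (hβ0 : β ≠ 0) (hβ : cl β = 2 ∨ cl β = 6)
    (hβl : β ^ l = -β) (hadd : ∀ x y : F, (x + y) ^ l = x ^ l + y ^ l) (hneg : cl (-1) = 4) :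
    ¬ ((p : ℤ) ∣ (nn K cl β 0 - nn K cl β 4) ∧ (p : ℤ) ∣ (nn K cl β 1 - nn K cl β 5)) := by
  rintro ⟨ha, hb⟩
  have ha' : ((nn K cl β 0 : ℤ) : F) - (nn K cl β 4 : ℤ) = 0 := by
    rw [← Int.cast_sub]; exact (CharP.intCast_eq_zero_iff F p _).2 ha
  have hb' : ((nn K cl β 1 : ℤ) : F) - (nn K cl β 5 : ℤ) = 0 := by
    rw [← Int.cast_sub]; exact (CharP.intCast_eq_zero_iff F p _).2 hb
  have hN0 : 0 < N := by
    have : 3 ≤ l := by omega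
    nlinarith
  have hq : Fintype.card F - 1 = 8 * N := by omega
  -- `ζ = α ^ N` satisfies `ζ ^ 4 = -1`
  have hz8 : (α ^ N) ^ 8 = 1 := by
    rw [← pow_mul, mul_comm, ← hq, FiniteField.pow_card_sub_one_eq_one _ H.ne]
  have hz4 : (α ^ N) ^ 4 = -1 := by
    have h1 : (α ^ N) ^ 4 ≠ 1 := by
      intro h
      rw [← pow_mul] at h
      have := Nat.le_of_dvd (by omega) (H.ord _ h)
      omega
    refine (mul_self_eq_one_iff.1 ?_).resolve_left h1
    rw [← hz8]; ring
  have hxN : ∀ x : F, x ≠ 0 → x ^ (5 * N) = ((α ^ N) ^ 5) ^ (cl x).val := by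
    intro x hx
    obtain ⟨n, rfl⟩ := H.ex x hx
    rw [H.pow, ZMod.val_natCast]
    have e1 : (α ^ n) ^ (5 * N) = ((α ^ N) ^ 5) ^ n := by
      simp only [← pow_mul]; congr 1; ring
    have e2 : ((α ^ N) ^ 5) ^ 8 = 1 := by rw [← pow_mul, mul_comm 5 8, pow_mul, hz8, one_pow]
    rw [e1]
    conv_lhs => rw [← Nat.div_add_mod n 8, pow_add, pow_mul, e2, one_pow, one_mul]
  have hE : ∑ v : K, (1 + v • β) ^ (5 * N) = 0 := by
    rw [Finset.sum_congr rfl (fun v _ => hxN _ (H.line_ne l hK hF hl hβ0 hβ v)),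
      sum_nn (K := K) (cl := cl) β (fun j => ((α ^ N) ^ 5) ^ j.val), sum8]
    have hn := H.nn_symm l hK hF hl hβ0 hβ hβl hadd
    have h13 : nn K cl β 3 = nn K cl β 1 := (hn 1).symm
    have h26 : nn K cl β 6 = nn K cl β 2 := (hn 2).symm
    have h57 : nn K cl β 7 = nn K cl β 5 := (hn 5).symm
    rw [h13, h26, h57]
    have v0 : (0 : ZMod 8).val = 0 := rfl
    have v1 : (1 : ZMod 8).val = 1 := rfl
    have v2 : (2 : ZMod 8).val = 2 := rfl
    have v3 : (3 : ZMod 8).val = 3 := rfl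
    have v4 : (4 : ZMod 8).val = 4 := rfl
    have v5 : (5 : ZMod 8).val = 5 := rfl
    have v6 : (6 : ZMod 8).val = 6 := rfl
    have v7 : (7 : ZMod 8).val = 7 := rfl
    rw [v0, v1, v2, v3, v4, v5, v6, v7]
    have hw : ((α ^ N) ^ 5) ^ 4 = -1 := by
      rw [← pow_mul, mul_comm, pow_mul, hz4]; ring
    generalize (α ^ N) ^ 5 = w at hw
    have w5 : w ^ 5 = - w := by linear_combination w * hw
    have w6 : w ^ 6 = - w ^ 2 := by linear_combination w ^ 2 * hw
    have w7 : w ^ 7 = - w ^ 3 := by linear_combination w ^ 3 * hw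
    rw [w5, w6, w7, hw]
    linear_combination ha' + (w + w ^ 3) * hb'
  have hkap : ∀ (u : K) (m : ℕ), m % 2 = 1 → (algebraMap K F u) ^ (m * N) = (kap cl u : ℤ) := by
    intro u m hm
    by_cases hu : u = 0
    · have : m * N ≠ 0 := Nat.mul_ne_zero (by omega) hN0.ne'
      simp [hu, kap, this]
    obtain ⟨n, hn⟩ := H.smul_aux l hK hF hl hu
    rw [kap, if_neg hu, ← hn, H.pow]
    have e1 : (α ^ (4 * n)) ^ (m * N) = (((α ^ N) ^ 4) ^ m) ^ n := by
      simp only [← pow_mul]; congr 1; ring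
    have e2 : (-1 : F) ^ m = -1 := Odd.neg_one_pow (Nat.odd_iff.2 hm)
    rw [e1, hz4, e2]
    have h4 : (4 : ZMod 8) ≠ 0 := by decide
    rcases Nat.even_or_odd n with h | h
    · have : ((4 * n : ℕ) : ZMod 8) = 0 := by
        rw [ZMod.natCast_eq_zero_iff]; obtain ⟨r, rfl⟩ := h; omega
      rw [this, h.neg_one_pow]; simp
    · have : ((4 * n : ℕ) : ZMod 8) ≠ 0 := by
        rw [Ne, ZMod.natCast_eq_zero_iff]; obtain ⟨r, rfl⟩ := h; omega
      rw [if_neg this, h.neg_one_pow]; simp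
  have hind := H.indep l hK hF hl hβ0 hβ 1 one_ne_zero
  rw [one_mul] at hind
  have hcor := corr (K := K) (by rw [hF, hK]) 1 β hind
    (fun x : F => x ^ (5 * N)) (fun x : F => x ^ (7 * N)) (kap cl) (fun u hu => kap_sq hu)
    (fun u x => by simp only [Algebra.smul_def, mul_pow]; rw [hkap u 5 rfl])
    (fun u x => by simp only [Algebra.smul_def, mul_pow]; rw [hkap u 7 rfl])
  simp only [hE, zero_mul, ← pow_add] at hcor
  rw [H.sum_kap l hK hF hl hneg, ← add_mul] at hcor
  have hinv := sum_inv (K := K) (by rw [hF, hK]) 1 β hind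
    (fun x : F => x ^ ((5 + 7) * N)) (by simp [hN0.ne'])
    (fun u hu x => by
      simp only [Algebra.smul_def, mul_pow]
      rw [add_mul, pow_add, hkap u 5 rfl, hkap u 7 rfl, ← Int.cast_mul, kap_sq hu]; simp)
  have h12 : ¬ (Fintype.card F - 1 ∣ (5 + 7) * N) := by
    rw [hq]
    rintro ⟨c, hc⟩
    have : c = 1 ∨ c = 0 ∨ 2 ≤ c := by omega
    rcases this with rfl | rfl | h <;> nlinarith
  have hcK : ((Fintype.card K : ℕ) : F) = 0 := by
    have h1 : ((Fintype.card K : ℕ) : K) = 0 := FiniteField.cast_card_eq_zero K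
    have := congrArg (algebraMap K F) h1
    rw [map_natCast, map_zero] at this
    exact this
  rw [sum_pow_card _ (by omega), if_neg h12, hcK] at hinv
  have hJ : ∑ x : F, x ^ (5 * N) * (x + β) ^ (7 * N) = 0 := by
    rw [hcor]; push_cast; linear_combination -hinv
  have hexp : ∑ x : F, x ^ (5 * N) * (x + β) ^ (7 * N) =
      - (((7 * N).choose (3 * N) : ℕ) : F) * β ^ (4 * N) := by
    simp only [add_pow, Finset.mul_sum]
    rw [Finset.sum_comm]
    rw [Finset.sum_eq_single (3 * N)]
    · have : ∀ x : F, x ^ (5 * N) * (x ^ (3 * N) * β ^ (7 * N - 3 * N) * (((7 * N).choose (3 * N) : ℕ) : F))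
          = x ^ (8 * N) * ((((7 * N).choose (3 * N) : ℕ) : F) * β ^ (4 * N)) := by
        intro x
        rw [show 7 * N - 3 * N = 4 * N by omega, show 8 * N = 5 * N + 3 * N by ring, pow_add]; ring
      rw [Finset.sum_congr rfl (fun x _ => this x), ← Finset.sum_mul, sum_pow_card _ (by omega), hq,
        if_pos dvd_rfl]
      ring
    · intro j hj hne
      have hj' := Finset.mem_range.1 hj
      have : ∀ x : F, x ^ (5 * N) * (x ^ j * β ^ (7 * N - j) * (((7 * N).choose j : ℕ) : F))
          = x ^ (5 * N + j) * ((((7 * N).choose j : ℕ) : F) * β ^ (7 * N - j)) := by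
        intro x
        rw [pow_add]; ring
      rw [Finset.sum_congr rfl (fun x _ => this x), ← Finset.sum_mul, sum_pow_card _ (by omega), hq,
        if_neg, zero_mul]
      rintro ⟨c, hc⟩
      have : c = 1 ∨ c = 0 ∨ 2 ≤ c := by omega
      rcases this with rfl | rfl | h
      · omega
      · omega
      · have : 8 * N * 2 ≤ 8 * N * c := Nat.mul_le_mul_left _ h
        omega
    · intro h
      exact absurd (Finset.mem_range.2 (by omega)) h
  rw [hexp] at hJ
  have hc0 : (((7 * N).choose (3 * N) : ℕ) : F) = 0 := by
    have := (mul_eq_zero.1 hJ).resolve_right (pow_ne_zero _ hβ0)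
    simpa using this
  rw [CharP.cast_eq_zero_iff F p] at hc0
  exact choose_coprime p k N hp (by rw [← hlp]; exact hl) (by rw [← hlp]; exact hN) hc0

end Odd

section Final

lemma intDiff_eq {G : Type*} [AddCommGroup G] [Fintype G] [DecidableEq G] (D A : Finset G)
    (lam mu : ℕ)
    (h : ∀ z : G, z ≠ 0 → (univ.filter (fun x => x ∈ D ∧ x + z ∈ D)).card = if z ∈ A then lam else mu) :
    intDiff D = lam • (A.erase 0).val + mu • (Gstar G \ A).val := by
  ext z
  rw [Multiset.count_add, Multiset.count_nsmul, Multiset.count_nsmul]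
  have hc : ∀ (S : Finset G), Multiset.count z S.val = if z ∈ S then 1 else 0 := by
    intro S
    rw [Multiset.count_eq_of_nodup S.nodup]; rfl
  rw [hc, hc, intDiff, Multiset.count_map]
  by_cases hz : z = 0
  · subst hz
    simp only [Gstar, Finset.mem_erase, Finset.mem_sdiff, ne_eq, not_true_eq_false, false_and,
      if_false, mul_zero, add_zero]
    rw [Multiset.card_eq_zero, Multiset.filter_eq_nil]
    rintro ⟨a, b⟩ hab h0
    have := (Finset.mem_filter.1 (show (a, b) ∈ (D ×ˢ D).filter (fun p => p.1 ≠ p.2) from hab)).2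
    exact this (sub_eq_zero.1 h0.symm)
  · have h1 : (Multiset.filter (fun p : G × G => z = p.1 - p.2)
        ((D ×ˢ D).filter (fun p => p.1 ≠ p.2)).val).card =
        (univ.filter (fun x => x ∈ D ∧ x + z ∈ D)).card := by
      change (((D ×ˢ D).filter (fun p => p.1 ≠ p.2)).filter (fun p => z = p.1 - p.2)).card = _
      refine Finset.card_bij' (fun p _ => p.2) (fun x _ => (x + z, x)) ?_ ?_ ?_ ?_
      · rintro ⟨a, b⟩ hp
        simp only [Finset.mem_filter, Finset.mem_product, mem_univ, true_and] at hp ⊢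
        refine ⟨hp.1.1.2, ?_⟩
        rw [hp.2]; simpa using hp.1.1.1
      · intro x hx
        simp only [Finset.mem_filter, Finset.mem_product, mem_univ, true_and] at hx ⊢
        refine ⟨⟨⟨hx.2, hx.1⟩, ?_⟩, by simp⟩
        simpa using hz
      · rintro ⟨a, b⟩ hp
        simp only [Finset.mem_filter] at hp
        simp [hp.2]
      · intro x _; rfl
    rw [h1, h z hz]
    by_cases hA : z ∈ A <;> simp [Gstar, hz, hA]

variable {K F : Type*} [Field K] [Fintype K] [DecidableEq K] [Field F] [Fintype F] [DecidableEq F]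
  [Algebra K F] {α : F} {cl : F → ZMod 8}

lemma ClData.sum_zero (H : ClData α cl) (T : ZMod 8 → ℤ) (hT0 : ∑ c, T c = 0) :
    ∑ x, fn cl T x = 0 := by
  have := H.sum_fn T
  rw [hT0] at this; omega

lemma ClData.card_D (H : ClData α cl) (D : Finset F) (T : ZMod 8 → ℤ) (hT0 : ∑ c, T c = 0)
    (hD : ∀ x, 2 * (if x ∈ D then 1 else 0 : ℤ) = (1 - (if x = 0 then 1 else 0)) + fn cl T x) :
    2 * (D.card : ℤ) = (Fintype.card F : ℤ) - 1 := by
  have h1 : (D.card : ℤ) = ∑ x, (if x ∈ D then 1 else 0 : ℤ) := by simp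
  rw [h1, Finset.mul_sum, Finset.sum_congr rfl (fun x _ => hD x), Finset.sum_add_distrib,
    H.sum_zero T hT0, Finset.sum_sub_distrib]
  simp

lemma ClData.count_D (H : ClData α cl) (D : Finset F) (T : ZMod 8 → ℤ) (hT0 : ∑ c, T c = 0)
    (hD : ∀ x, 2 * (if x ∈ D then 1 else 0 : ℤ) = (1 - (if x = 0 then 1 else 0)) + fn cl T x)
    (z : F) (hz : z ≠ 0) :
    4 * ((univ.filter (fun x => x ∈ D ∧ x + z ∈ D)).card : ℤ) =
      (Fintype.card F : ℤ) - 2 - fn cl T z - fn cl T (-z) + ∑ x, fn cl T x * fn cl T (x + z) := by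
  have h1 : ((univ.filter (fun x => x ∈ D ∧ x + z ∈ D)).card : ℤ) =
      ∑ x, (if x ∈ D then 1 else 0 : ℤ) * (if x + z ∈ D then 1 else 0) := by
    rw [Finset.card_filter]; push_cast
    refine Finset.sum_congr rfl fun x _ => ?_
    by_cases h : x ∈ D <;> by_cases h' : x + z ∈ D <;> simp [h, h']
  have h2 : ∀ x, 4 * ((if x ∈ D then 1 else 0 : ℤ) * (if x + z ∈ D then 1 else 0)) =
      1 - (if x = 0 then 1 else 0) - (if x = -z then 1 else 0) + fn cl T x + fn cl T (x + z)
        - (if x = 0 then fn cl T z else 0) - (if x = -z then fn cl T (-z) else 0)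
        + fn cl T x * fn cl T (x + z) := by
    intro x
    have e1 := hD x
    have e2 := hD (x + z)
    have e3 : 4 * ((if x ∈ D then 1 else 0 : ℤ) * (if x + z ∈ D then 1 else 0)) =
      (2 * (if x ∈ D then 1 else 0 : ℤ)) * (2 * (if x + z ∈ D then 1 else 0)) := by ring
    rw [e3, e1, e2]
    by_cases hx : x = 0
    · have : ¬ ((0 : F) = -z) := by simpa [eq_comm] using hz
      subst hx
      simp [hz, this, fn_zero]
    · by_cases hx2 : x = -z
      · subst hx2
        have : fn cl T (0 : F) = 0 := fn_zero T
        simp [hz, this]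
      · have : x + z ≠ 0 := fun h => hx2 (eq_neg_of_add_eq_zero_left h)
        simp only [hx, hx2, this, if_false]
        ring
  have h3 : ∑ x, fn cl T (x + z) = 0 := by
    rw [← H.sum_zero T hT0]
    exact Fintype.sum_equiv (Equiv.addRight z) _ _ fun _ => rfl
  rw [h1, Finset.mul_sum, Finset.sum_congr rfl (fun x _ => h2 x)]
  simp only [Finset.sum_add_distrib, Finset.sum_sub_distrib, Finset.sum_ite_eq', mem_univ, if_true,
    h3, H.sum_zero T hT0]
  simp; ring

lemma ClData.mem_cyc (H : ClData α cl) (e i : ℕ) (x : F) :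
    x ∈ cycClass α e i ↔ ∃ j, α ^ (e * j + i) = x := by
  unfold cycClass
  rw [Finset.mem_image]
  constructor
  · rintro ⟨j, _, h⟩; exact ⟨j, h⟩
  · rintro ⟨j, h⟩
    have h1 : 1 < Fintype.card F := Fintype.one_lt_card
    have h2 : j % (Fintype.card F - 1) < Fintype.card F - 1 := Nat.mod_lt _ (by omega)
    refine ⟨j % (Fintype.card F - 1), Finset.mem_range.2 (by omega), ?_⟩
    rw [← h, pow_add, pow_add, pow_mul, pow_mul]
    congr 1
    have h3 : (α ^ e) ^ (Fintype.card F - 1) = 1 :=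
      FiniteField.pow_card_sub_one_eq_one _ (pow_ne_zero _ H.ne)
    conv_rhs => rw [← Nat.div_add_mod j (Fintype.card F - 1), pow_add, pow_mul, h3, one_pow, one_mul]

lemma ClData.mem_cyc8 (H : ClData α cl) (i : ℕ) (hi : i < 8) (x : F) (hx : x ≠ 0) :
    x ∈ cycClass α 8 i ↔ cl x = i := by
  rw [H.mem_cyc]
  constructor
  · rintro ⟨j, rfl⟩
    rw [H.pow, ZMod.natCast_eq_natCast_iff']; omega
  · intro h
    obtain ⟨n, rfl⟩ := H.ex x hx
    rw [H.pow, ZMod.natCast_eq_natCast_iff'] at h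
    exact ⟨n / 8, by congr 1; omega⟩

lemma ClData.mem_cyc2 (H : ClData α cl) (x : F) (hx : x ≠ 0) :
    x ∈ cycClass α 2 0 ↔ (cl x = 0 ∨ cl x = 2 ∨ cl x = 4 ∨ cl x = 6) := by
  have key : ∀ n i : ℕ, (n : ZMod 8) = i ↔ n % 8 = i % 8 := fun n i =>
    ZMod.natCast_eq_natCast_iff' n i 8
  have k0 := fun n => key n 0
  have k2 := fun n => key n 2
  have k4 := fun n => key n 4
  have k6 := fun n => key n 6
  push_cast at k0 k2 k4 k6
  rw [H.mem_cyc]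
  constructor
  · rintro ⟨j, rfl⟩
    rw [H.pow, k0, k2, k4, k6]; omega
  · intro h
    obtain ⟨n, rfl⟩ := H.ex x hx
    rw [H.pow, k0, k2, k4, k6] at h
    exact ⟨n / 2, by congr 1; omega⟩

lemma ClData.zero_notMem (H : ClData α cl) (e i : ℕ) : (0 : F) ∉ cycClass α e i := by
  rw [H.mem_cyc]
  rintro ⟨j, h⟩
  exact pow_ne_zero _ H.ne h

/-- sign function of `D` -/
def Tg : ZMod 8 → ℤ := ![1, 1, 1, -1, -1, 1, -1, -1]
/-- quadratic character -/
def Tq : ZMod 8 → ℤ := ![1, -1, 1, -1, 1, -1, 1, -1]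

lemma ClData.fn_neg (H : ClData α cl) (hneg : cl (-1) = 4) (T : ZMod 8 → ℤ) (x : F) :
    fn cl T (-x) = fn cl (fun c => T (4 + c)) x := by
  by_cases hx : x = 0
  · simp [hx, fn]
  · rw [fn_ne _ (neg_ne_zero.2 hx), fn_ne _ hx, ← neg_one_mul, H.mul (by simp) hx, hneg]

lemma ClData.corr_g (H : ClData α cl) (hneg : cl (-1) = 4) (z : F) :
    ∑ x, fn cl Tg x * fn cl Tg (x + z) =
      ∑ x, fn cl To x * fn cl To (x + z) + ∑ x, fn cl Te x * fn cl Te (x + z) := by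
  have hg : ∀ x, fn cl Tg x = fn cl To x + fn cl Te x := by
    intro x
    have : ∀ c, Tg c = To c + Te c := by decide
    unfold fn; split_ifs
    · rfl
    · exact this _
  have ho : ∀ x, fn cl To (-x) = - fn cl To x := by
    intro x; rw [H.fn_neg hneg]
    have : ∀ c, To (4 + c) = - To c := by decide
    unfold fn; split_ifs
    · rfl
    · exact this _
  have he : ∀ x, fn cl Te (-x) = fn cl Te x := by
    intro x; rw [H.fn_neg hneg]
    have : ∀ c, Te (4 + c) = Te c := by decide
    unfold fn; split_ifs
    · rfl
    · exact this _
  have hcross : ∑ x, fn cl Te x * fn cl To (x + z) = - ∑ x, fn cl To x * fn cl Te (x + z) := by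
    rw [← Finset.sum_neg_distrib]
    symm
    refine Fintype.sum_equiv (Equiv.subLeft (-z)) _ _ fun x => ?_
    change _ = fn cl Te (-z - x) * fn cl To (-z - x + z)
    rw [show -z - x = -(x + z) by ring, he, show -(x + z) + z = -x by ring, ho]; ring
  have : ∀ x, fn cl Tg x * fn cl Tg (x + z) = fn cl To x * fn cl To (x + z) +
      fn cl Te x * fn cl Te (x + z) + (fn cl To x * fn cl Te (x + z)) +
      (fn cl Te x * fn cl To (x + z)) := by
    intro x; rw [hg, hg]; ring
  rw [Finset.sum_congr rfl (fun x _ => this x)]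
  simp only [Finset.sum_add_distrib]
  rw [hcross]; ring

lemma core (l : ℕ) (p k : ℕ) (hp : p.Prime) (hk : k ≠ 0) (hlp : l = p ^ k) (hl8 : l % 8 = 3)
    (d : ℤ) (hd : (l : ℤ) = d ^ 2 + 2) [CharP F p] (hK : Fintype.card K = l)
    (hF : Fintype.card F = l ^ 2)
    (α : F) (hα : IsPrimitiveElt α) :
    IsSkewPDS (cycClass α 8 0 ∪ cycClass α 8 1 ∪ cycClass α 8 2 ∪ cycClass α 8 5)
      (cycClass α 2 0) (l ^ 2) ((l ^ 2 - 1) / 2) ((l ^ 2 - 5) / 4) ((l ^ 2 - 1) / 4) := by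
  obtain ⟨N, hN, hNodd⟩ : ∃ N, 8 * N + 1 = l ^ 2 ∧ N % 2 = 1 := by
    obtain ⟨t, ht⟩ : ∃ t, l = 8 * t + 3 := ⟨l / 8, by omega⟩
    refine ⟨2 * (4 * t ^ 2 + 3 * t) + 1, by rw [ht]; ring, by omega⟩
  have hN0 : 0 < N := by omega
  have hp2 : p ≠ 2 := by
    rintro rfl
    obtain ⟨j, rfl⟩ := Nat.exists_eq_succ_of_ne_zero hk
    rw [pow_succ] at hlp; omega
  obtain ⟨cl, H⟩ := exists_cl α hα (by omega) ⟨N, by omega⟩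
  have hne : (-1 : F) ≠ 1 := by
    intro h
    have h2 : ((2 : ℕ) : F) = 0 := by push_cast; linear_combination -h
    rw [CharP.cast_eq_zero_iff F p] at h2
    exact hp2 ((Nat.prime_dvd_prime_iff_eq hp Nat.prime_two).1 h2)
  have hneg := H.neg_one N (by rw [hN, hF]) hNodd hne
  haveI : Fact p.Prime := ⟨hp⟩
  have hadd : ∀ x y : F, (x + y) ^ l = x ^ l + y ^ l := by
    intro x y; rw [hlp]; exact add_pow_char_pow x y p k
  obtain ⟨β, hβ0, hβl, hβ⟩ := H.exists_beta l hF hl8 hne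
  have hnorm := H.norm_eq (K := K) l hK hF hl8 hβ0 hβ hβl hadd hneg
  have hnd := H.not_dvd (K := K) p k l N hp hlp hK hF hl8 hN hβ0 hβ hβl hadd hneg
  have hodd := H.corr_odd (K := K) l hK hF hl8 hβ0 hβ hβl hadd hneg
  generalize nn K cl β 0 - nn K cl β 4 = a at hnorm hnd hodd
  generalize nn K cl β 1 - nn K cl β 5 = b at hnorm hnd hodd
  have hb : b ^ 2 = 1 := rep_unique p k hp hp2 a b d (by rw [← hlp]; exact hd)
    (by rw [← hlp]; exact hnorm) hk hnd
  have ha : a ^ 2 = l - 2 := by rw [hb] at hnorm; linarith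
  have hTe := H.corr_even (K := K) l hK hF hl8 hβ0 hβ Te (by decide) (by decide)
  have hTq := H.corr_even (K := K) l hK hF hl8 hβ0 hβ Tq (by decide) (by decide)
  have hc8 : ∀ c : ZMod 8, c = 0 ∨ c = 1 ∨ c = 2 ∨ c = 3 ∨ c = 4 ∨ c = 5 ∨ c = 6 ∨ c = 7 := by
    decide
  have hFZ : (Fintype.card F : ℤ) = 8 * N + 1 := by rw [hF, ← hN]; push_cast; ring
  set D := cycClass α 8 0 ∪ cycClass α 8 1 ∪ cycClass α 8 2 ∪ cycClass α 8 5 with hDdef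
  set A := cycClass α 2 0 with hAdef
  have hmD : ∀ x : F, x ≠ 0 → (x ∈ D ↔ (cl x = 0 ∨ cl x = 1 ∨ cl x = 2 ∨ cl x = 5)) := by
    intro x hx
    rw [hDdef]
    simp only [Finset.mem_union]
    rw [H.mem_cyc8 0 (by norm_num) x hx, H.mem_cyc8 1 (by norm_num) x hx,
      H.mem_cyc8 2 (by norm_num) x hx, H.mem_cyc8 5 (by norm_num) x hx]
    push_cast
    tauto
  have hDs : ∀ x, 2 * (if x ∈ D then 1 else 0 : ℤ) = (1 - (if x = 0 then 1 else 0)) + fn cl Tg x := by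
    intro x
    by_cases hx : x = 0
    · subst hx
      have : (0 : F) ∉ D := by simp [hDdef, H.zero_notMem]
      simp [this, fn_zero]
    · rw [fn_ne _ hx]
      simp only [hmD x hx, hx, if_false]
      generalize cl x = c
      revert c; decide
  have hAs : ∀ x, 2 * (if x ∈ A then 1 else 0 : ℤ) = (1 - (if x = 0 then 1 else 0)) + fn cl Tq x := by
    intro x
    by_cases hx : x = 0
    · subst hx
      have : (0 : F) ∉ A := H.zero_notMem _ _
      simp [this, fn_zero]
    · rw [fn_ne _ hx]
      simp only [hAdef, H.mem_cyc2 x hx, hx, if_false]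
      generalize cl x = c
      revert c; decide
  have hcardD := H.card_D D Tg (by decide) hDs
  have hcardA := H.card_D A Tq (by decide) hAs
  refine ⟨⟨hF, by omega, ?_⟩, by omega, ?_⟩
  · apply intDiff_eq
    intro z hz
    have h1 := H.count_D A Tq (by decide) hAs z hz
    have h2 := hTq z hz
    have hs : ∑ c, Tq c ^ 2 = 8 := by decide
    have hsq : Tq (cl z) ^ 2 = 1 := by
      generalize cl z = c
      revert c; decide
    rw [hs, hsq] at h2
    rw [H.fn_neg hneg, fn_ne _ hz, fn_ne _ hz] at h1
    have h4 : Tq (4 + cl z) = Tq (cl z) := by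
      generalize cl z = c
      revert c; decide
    rw [h4] at h1
    have h5 := hAs z
    rw [fn_ne _ hz, if_neg hz] at h5
    generalize (univ.filter (fun x => x ∈ A ∧ x + z ∈ A)).card = n at h1 ⊢
    split_ifs at h5 ⊢ <;> omega
  · apply intDiff_eq
    intro z hz
    have h1 := H.count_D D Tg (by decide) hDs z hz
    rw [H.corr_g hneg, H.fn_neg hneg, fn_ne _ hz, fn_ne _ hz] at h1
    have h2 := hTe z hz
    have hs : ∑ c, Te c ^ 2 = 4 := by decide
    rw [hs] at h2
    have h3 := hodd z hz
    have h5 := hAs z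
    rw [fn_ne _ hz, if_neg hz] at h5
    generalize (univ.filter (fun x => x ∈ D ∧ x + z ∈ D)).card = n at h1 ⊢
    generalize ∑ x, fn cl To x * fn cl To (x + z) = so at h1 h3
    generalize ∑ x, fn cl Te x * fn cl Te (x + z) = se at h1 h2
    have hval : (Tq (cl z) = 1 ∧ Te (cl z) ^ 2 = 0 ∧ Th a b (cl z) = a ^ 2 ∧
          Tg (cl z) + Tg (4 + cl z) = 0) ∨
        (Tq (cl z) = -1 ∧ Te (cl z) ^ 2 = 1 ∧ Th a b (cl z) = 4 * b ^ 2 ∧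
          Tg (cl z) + Tg (4 + cl z) = 2) ∨
        (Tq (cl z) = -1 ∧ Te (cl z) ^ 2 = 1 ∧ Th a b (cl z) = 0 ∧
          Tg (cl z) + Tg (4 + cl z) = -2) := by
      rcases hc8 (cl z) with h | h | h | h | h | h | h | h <;> rw [h]
      · exact Or.inl ⟨rfl, rfl, rfl, rfl⟩
      · exact Or.inr (Or.inl ⟨rfl, rfl, rfl, rfl⟩)
      · exact Or.inl ⟨rfl, rfl, rfl, rfl⟩
      · exact Or.inr (Or.inr ⟨rfl, rfl, rfl, rfl⟩)
      · exact Or.inl ⟨rfl, rfl, rfl, rfl⟩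
      · exact Or.inr (Or.inl ⟨rfl, rfl, rfl, rfl⟩)
      · exact Or.inl ⟨rfl, rfl, rfl, rfl⟩
      · exact Or.inr (Or.inr ⟨rfl, rfl, rfl, rfl⟩)
    rcases hval with ⟨e1, e2, e3, e4⟩ | ⟨e1, e2, e3, e4⟩ | ⟨e1, e2, e3, e4⟩ <;>
      rw [e1] at h5 <;> rw [e2] at h2 <;> rw [e3] at h3 <;> split_ifs at h5 ⊢ <;> omega

end Final

/-- Let `q = ℓ²` where `ℓ = d² + 2 ≡ 3 (mod 8)` is a prime power and `d` an
integer.  Then `D = C_0^8 ∪ C_1^8 ∪ C_2^8 ∪ C_5^8` is a skew Paley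
`(q,(q-1)/2,(q-5)/4,(q-1)/4)`-PDS corresponding to the Paley PDS `C_0^2`. -/
theorem stmt_7 {F : Type*} [Field F] [Fintype F] [DecidableEq F]
    (l : ℕ) (hlpp : IsPrimePow l) (hl8 : l % 8 = 3)
    (d : ℤ) (hd : (l : ℤ) = d ^ 2 + 2)
    (q : ℕ) (hq : Fintype.card F = q) (hql : q = l ^ 2)
    (α : F) (hα : IsPrimitiveElt α) :
    IsSkewPDS (cycClass α 8 0 ∪ cycClass α 8 1 ∪ cycClass α 8 2 ∪ cycClass α 8 5)
      (cycClass α 2 0) q ((q - 1) / 2) ((q - 5) / 4) ((q - 1) / 4) := by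
  subst hql
  obtain ⟨p, k, hp', hk, hlp⟩ := hlpp
  have hp : p.Prime := Nat.prime_iff.2 hp'
  haveI : Fact p.Prime := ⟨hp⟩
  have hcardF : Fintype.card F = p ^ (2 * k) := by rw [hq, ← hlp, ← pow_mul, mul_comm]
  haveI : CharP F p := charP_of_card_eq_prime_pow hcardF
  letI : Algebra (ZMod p) F := ZMod.algebra F p
  letI : Fintype (GaloisField p k) := Fintype.ofFinite _
  classical
  have hcK : Fintype.card (GaloisField p k) = l := by
    rw [← Nat.card_eq_fintype_card, GaloisField.card p k hk.ne', hlp]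
  have hfr : Module.finrank (ZMod p) F = 2 * k := by
    have := FiniteField.pow_finrank_eq_card p F
    rw [hcardF] at this
    exact Nat.pow_right_injective hp.two_le this
  obtain ⟨f⟩ := FiniteField.nonempty_algHom_of_finrank_dvd (F := ZMod p) (K := GaloisField p k)
    (L := F) (by rw [hfr, GaloisField.finrank p hk.ne']; exact Dvd.intro_left 2 rfl)
  letI : Algebra (GaloisField p k) F := f.toRingHom.toAlgebra
  exact core (K := GaloisField p k) l p k hp hk.ne' hlp.symm hl8 d hd hcK hq α hα
end
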